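/- Let 0 < ε < 1, let q : ℂ → ℂ be compactly supported and Hölder continuous with exponent ε, and fix 2 < r₀ < ∞. Suppose M₁₁, M₁₂, M₂₁, M₂₂ : ℂ × ℂ → ℂ are jointly continuous and, for every k ∈ ℂ, the functions z ↦ Mᵢⱼ(z,k) are real-differentiable, satisfy the system ∂̄_z M₁₁ = q·M₂₁, ∂_z M₂₁ + i·k·M₂₁ = conj(q)·M₁₁, ∂̄_z M₁₂ − i·k·M₁₂ = q·M₂₂, ∂_z M₂₂ = conj(q)·M₁₂ on ℂ, with M₁₁(·,k) − 1, M₁₂(·,k), M₂₁(·,k), M₂₂(·,k) − 1 in L^{r₀}(ℂ) and Hölder continuous with exponent ε. Then for every s with 2 < s < ∞ there exists a constant C such that for every z ∈ ℂ the functions k ↦ M₁₁(z,k) − 1, k ↦ M₁₂(z,k), k ↦ M₂₁(z,k), k ↦ M₂₂(z,k) − 1 belong to L^s(ℂ) (in the variable k, with respect to Lebesgue measure) with L^s-norm at most C. -/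

import Mathlib

open MeasureTheory Complex

/-- Wirtinger derivative `∂f = (∂ₓf − i∂_yf)/2` of `f : ℂ → ℂ`. -/
noncomputable def wD (f : ℂ → ℂ) (z : ℂ) : ℂ :=
  (fderiv ℝ f z 1 - Complex.I * fderiv ℝ f z Complex.I) / 2

/-- Wirtinger derivative `∂̄f = (∂ₓf + i∂_yf)/2` of `f : ℂ → ℂ`. -/
noncomputable def wDbar (f : ℂ → ℂ) (z : ℂ) : ℂ :=
  (fderiv ℝ f z 1 + Complex.I * fderiv ℝ f z Complex.I) / 2

/-- `f` is Hölder continuous with exponent `ε`. -/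
def IsHolder (ε : ℝ) (f : ℂ → ℂ) : Prop :=
  ∃ C ≥ (0 : ℝ), ∀ z z' : ℂ, ‖f z - f z'‖ ≤ C * ‖z - z'‖ ^ ε

/-!
Conjugating the second equation and multiplying by the unimodular exponential `e_{-k}` turns the
system for a column `(m, n)` into the pair `m - 1 = T u`, `u = T m`, where `u = e_{-k} conj n` and
`T f = C[q e_{-k} conj f]` with `C` the Cauchy transform. Hence `m - 1 = T² 1 + T² (m - 1)`.

The kernel of `T²` is an integral over the support of `q` against a plane wave, so by the
Riemann–Lebesgue lemma `T²` is a contraction in the sup norm for large `k`. Hence `m - 1` is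
dominated there by `T² 1`, uniformly in `z`, while small `k` are handled by joint continuity.

As a function of `k`, `T 1 (z)` is the Fourier transform of `w ↦ q(w) / (π (z - w))`, which lies
in `L^{s'}` because `s' < 2`. The Hausdorff–Young inequality bounds its `L^s` norm in `k` uniformly
in `z`, and Hölder's inequality carries this bound over to `T² 1` and then to `m - 1` and `n`.
-/

open scoped ComplexConjugate ENNReal FourierTransform Real SchwartzMap

lemma eLpNorm_ofReal_rpow {α ε : Type*} [MeasurableSpace α] {μ : Measure α} [ENorm ε] {r : ℝ}
    (hr : 0 < r) (f : α → ε) : eLpNorm f (ENNReal.ofReal r) μ ^ r = ∫⁻ x, ‖f x‖ₑ ^ r ∂μ := by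
  rw [eLpNorm_eq_lintegral_rpow_enorm_toReal (ENNReal.ofReal_pos.2 hr).ne' ENNReal.ofReal_ne_top,
    ENNReal.toReal_ofReal hr.le, ← ENNReal.rpow_mul, one_div_mul_cancel hr.ne', ENNReal.rpow_one]

lemma setLIntegral_Ioc_rpow {a c : ℝ} (ha : -1 < a) (hc : 0 ≤ c) :
    ∫⁻ t in Set.Ioc 0 c, ENNReal.ofReal (t ^ a) = ENNReal.ofReal (c ^ (a + 1) / (a + 1)) := by
  have hint : IntervalIntegrable (fun t : ℝ => t ^ a) volume 0 c :=
    intervalIntegral.intervalIntegrable_rpow' ha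
  rw [intervalIntegrable_iff_integrableOn_Ioc_of_le hc] at hint
  rw [← ofReal_integral_eq_lintegral_ofReal hint, ← intervalIntegral.integral_of_le hc,
    integral_rpow (Or.inl ha),
    Real.zero_rpow (by linarith), sub_zero]
  filter_upwards [ae_restrict_mem measurableSet_Ioc] with t ht
  exact Real.rpow_nonneg ht.1.le a

lemma lintegral_indicator_mul_rpow_le {p s : ℝ} (hps : p.HolderConjugate s) (hs : 2 < s) {B x : ℝ}
    (hB : 0 ≤ B) (hx : 0 ≤ x) :
    ∫⁻ t in Set.Ioi (0 : ℝ), {t | t * x ^ (p - 1) ≤ B}.indicator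
        (fun t => ENNReal.ofReal (x ^ 2) * ENNReal.ofReal (t ^ (s - 3))) t
      ≤ ENNReal.ofReal (B ^ (s - 2) / (s - 2)) * ENNReal.ofReal (x ^ p) := by
  rcases hx.eq_or_lt with rfl | hx
  · simp
  have hy : 0 < x ^ (p - 1) := Real.rpow_pos_of_pos hx _
  have hset : {t : ℝ | t * x ^ (p - 1) ≤ B} = Set.Iic (B / x ^ (p - 1)) :=
    Set.ext fun t => (le_div_iff₀ hy).symm
  rw [hset, lintegral_indicator measurableSet_Iic, Measure.restrict_restrict measurableSet_Iic,
    Set.Iic_inter_Ioi, lintegral_const_mul' _ _ ENNReal.ofReal_ne_top,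
    setLIntegral_Ioc_rpow (by linarith) (by positivity), ← ENNReal.ofReal_mul (by positivity),
    ← ENNReal.ofReal_mul (div_nonneg (by positivity) (by linarith))]
  have hexp : (p - 1) * (s - 2) = 2 - p := by linarith [hps.mul_eq_add]
  have hpow : x ^ 2 = x ^ p * (x ^ (p - 1)) ^ (s - 2) := by
    rw [← Real.rpow_mul hx.le, hexp, ← Real.rpow_add hx, ← Real.rpow_natCast]
    congr 1; norm_num
  refine ENNReal.ofReal_le_ofReal (le_of_eq ?_)
  rw [show s - 3 + 1 = s - 2 by ring, Real.div_rpow hB hy.le, hpow]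
  have := (Real.rpow_pos_of_pos hy (s - 2)).ne'
  field_simp

lemma lintegral_enorm_rpow_eq_lintegral_meas_le_mul {α F : Type*} [MeasurableSpace α]
    {μ : Measure α} [SeminormedAddCommGroup F] {f : α → F} (hf : AEStronglyMeasurable f μ) {s : ℝ}
    (hs : 0 < s) :
    ∫⁻ x, ‖f x‖ₑ ^ s ∂μ = ENNReal.ofReal s *
      ∫⁻ t in Set.Ioi 0, μ {x | ENNReal.ofReal t ≤ ‖f x‖ₑ} * ENNReal.ofReal (t ^ (s - 1)) := by
  have hlayer := lintegral_rpow_eq_lintegral_meas_le_mul μ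
    (Filter.Eventually.of_forall fun x => norm_nonneg (f x)) hf.norm.aemeasurable hs
  have hlevel (t : ℝ) (x : α) : ENNReal.ofReal t ≤ ‖f x‖ₑ ↔ t ≤ ‖f x‖ := by
    rw [← ofReal_norm, ENNReal.ofReal_le_ofReal_iff (norm_nonneg _)]
  simp_rw [hlevel, ← hlayer, ← ENNReal.ofReal_rpow_of_nonneg (norm_nonneg _) hs.le, ofReal_norm]

lemma setLIntegral_enorm_compl_le {α F : Type*} [MeasurableSpace α] {μ : Measure α}
    [NormedAddCommGroup F] {g : α → F} (hg : StronglyMeasurable g) {p t A : ℝ} (hA : 0 < A)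
    (hgA : ∫⁻ w, ‖g w‖ₑ ^ p ∂μ = ENNReal.ofReal A) (hp : 0 < p) (ht : 0 < t) :
    ∫⁻ w in {w | t * ‖g w‖ ^ (p - 1) ≤ 2 * A}ᶜ, ‖g w‖ₑ ∂μ ≤ ENNReal.ofReal t / 2 := by
  have hpoint : ∀ w ∈ {w | t * ‖g w‖ ^ (p - 1) ≤ 2 * A}ᶜ,
      ‖g w‖ₑ ≤ ENNReal.ofReal (t / (2 * A)) * ‖g w‖ₑ ^ p := by
    intro w hw
    have hw : 2 * A < t * ‖g w‖ ^ (p - 1) := not_le.1 hw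
    rw [← ofReal_norm, ENNReal.ofReal_rpow_of_nonneg (norm_nonneg _) hp.le,
      ← ENNReal.ofReal_mul (by positivity)]
    refine ENNReal.ofReal_le_ofReal ?_
    rcases (norm_nonneg (g w)).eq_or_lt with h0 | h0
    · rw [← h0]; positivity
    have hpow : ‖g w‖ ^ p = ‖g w‖ ^ (p - 1) * ‖g w‖ := by
      rw [← Real.rpow_add_one h0.ne', sub_add_cancel]
    rw [hpow, div_mul_eq_mul_div, le_div_iff₀ (by positivity)]
    nlinarith
  calc ∫⁻ w in {w | t * ‖g w‖ ^ (p - 1) ≤ 2 * A}ᶜ, ‖g w‖ₑ ∂μ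
      ≤ ∫⁻ w in {w | t * ‖g w‖ ^ (p - 1) ≤ 2 * A}ᶜ,
          ENNReal.ofReal (t / (2 * A)) * ‖g w‖ₑ ^ p ∂μ :=
        setLIntegral_mono (by fun_prop) hpoint
    _ ≤ ∫⁻ w, ENNReal.ofReal (t / (2 * A)) * ‖g w‖ₑ ^ p ∂μ := setLIntegral_le_lintegral _ _
    _ = ENNReal.ofReal t / 2 := by
      rw [lintegral_const_mul' _ _ ENNReal.ofReal_ne_top, hgA,
        ← ENNReal.ofReal_mul (by positivity), ← ENNReal.ofReal_ofNat 2,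
        ← ENNReal.ofReal_div_of_pos two_pos]
      congr 1
      field_simp

lemma ofReal_mul_four_mul_rpow_div {s A : ℝ} (hs : 2 < s) (hA : 0 < A) :
    ENNReal.ofReal s * (4 * (ENNReal.ofReal ((2 * A) ^ (s - 2) / (s - 2)) * ENNReal.ofReal A)) =
      ENNReal.ofReal (s * 2 ^ s / (s - 2)) * ENNReal.ofReal A ^ (s - 1) := by
  have : 0 < s - 2 := by linarith
  have hpow : A ^ (s - 2) * A = A ^ (s - 1) := by
    rw [← Real.rpow_add_one hA.ne']; ring_nf
  have htwo : (4 : ℝ) * 2 ^ (s - 2) = 2 ^ s := by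
    rw [Real.rpow_sub two_pos]; norm_num; ring
  rw [← ENNReal.ofReal_ofNat 4, ENNReal.ofReal_rpow_of_pos hA,
    ← ENNReal.ofReal_mul (by positivity), ← ENNReal.ofReal_mul (by positivity),
    ← ENNReal.ofReal_mul (by positivity), ← ENNReal.ofReal_mul (by positivity), ← hpow,
    ← htwo, Real.mul_rpow two_pos.le hA.le]
  congr 1
  ring

section HausdorffYoung

variable {V F : Type*} [NormedAddCommGroup V] [InnerProductSpace ℝ V] [FiniteDimensional ℝ V]
  [MeasurableSpace V] [BorelSpace V] [NormedAddCommGroup F] [InnerProductSpace ℂ F]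
  {g : V → F}

lemma continuous_fourier_of_integrable (hg : Integrable g) : Continuous (𝓕 g) :=
  VectorFourier.fourierIntegral_continuous Real.continuous_fourierChar continuous_inner hg

lemma enorm_fourier_le_lintegral_enorm (g : V → F) (ξ : V) : ‖𝓕 g ξ‖ₑ ≤ ∫⁻ w, ‖g w‖ₑ := by
  refine (enorm_integral_le_lintegral_enorm _).trans_eq ?_
  simp only [← ofReal_norm, Circle.norm_smul]

lemma fourier_eq_indicator_add_compl {E : Set V} (hE : MeasurableSet E) (hg : Integrable g)
    (ξ : V) : 𝓕 g ξ = 𝓕 (E.indicator g) ξ + 𝓕 (Eᶜ.indicator g) ξ := by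
  conv_lhs => rw [← Set.indicator_self_add_compl E g]
  exact congrFun (VectorFourier.fourierIntegral_add Real.continuous_fourierChar continuous_inner
    (hg.indicator hE) (hg.indicator hE.compl)) ξ

lemma half_le_enorm_fourier_indicator {E : Set V} (hE : MeasurableSet E) (hg : Integrable g)
    {t : ℝ≥0∞} (ht : t ≠ ⊤) (htail : ∫⁻ w in Eᶜ, ‖g w‖ₑ ≤ t / 2) {ξ : V} (hξ : t ≤ ‖𝓕 g ξ‖ₑ) :
    t / 2 ≤ ‖𝓕 (E.indicator g) ξ‖ₑ := by
  have hrest : ‖𝓕 (Eᶜ.indicator g) ξ‖ₑ ≤ t / 2 := by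
    refine (enorm_fourier_le_lintegral_enorm _ ξ).trans (le_of_eq_of_le ?_ htail)
    simp_rw [enorm_indicator_eq_indicator_enorm, lintegral_indicator hE.compl]
  refine ENNReal.le_of_add_le_add_right (ENNReal.div_ne_top ht two_ne_zero) ?_
  calc t / 2 + t / 2 = t := ENNReal.add_halves t
    _ ≤ ‖𝓕 g ξ‖ₑ := hξ
    _ = ‖𝓕 (E.indicator g) ξ + 𝓕 (Eᶜ.indicator g) ξ‖ₑ := by
      rw [fourier_eq_indicator_add_compl hE hg]
    _ ≤ ‖𝓕 (E.indicator g) ξ‖ₑ + ‖𝓕 (Eᶜ.indicator g) ξ‖ₑ := enorm_add_le _ _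
    _ ≤ ‖𝓕 (E.indicator g) ξ‖ₑ + t / 2 := by gcongr

variable [CompleteSpace F]

lemma fourier_ae_eq_fourier_toLp (hg : Integrable g) (hg2 : MemLp g 2) :
    𝓕 g =ᵐ[volume] (𝓕 (hg2.toLp g) : Lp (α := V) F 2 volume) := by
  apply ae_eq_of_integral_contDiff_smul_eq
    (continuous_fourier_of_integrable hg).locallyIntegrable
    ((Lp.memLp (𝓕 (hg2.toLp g))).locallyIntegrable one_le_two)
  intro φ hφ hφc
  have hcompact : HasCompactSupport fun x => (φ x : ℂ) :=
    hφc.comp_left (g := fun x : ℝ => (x : ℂ)) ofReal_zero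
  set Φ : 𝓢(V, ℂ) := hcompact.toSchwartzMap (ofRealCLM.contDiff.comp hφ)
  have hΦ (u : V → F) : ∫ x, φ x • u x = ∫ x, Φ x • u x := rfl
  have hdual := congrArg (fun T => T Φ) (Lp.fourier_toTemperedDistribution_eq (hg2.toLp g))
  simp only [TemperedDistribution.fourier_apply, Lp.toTemperedDistribution_apply] at hdual
  have hflip := VectorFourier.integral_fourierIntegral_smul_eq_flip (L := innerₗ V)
    (μ := volume) (ν := volume) Real.continuous_fourierChar continuous_inner Φ.integrable hg
  rw [flip_innerₗ] at hflip
  calc ∫ x, φ x • 𝓕 g x = ∫ x, Φ x • 𝓕 g x := hΦ _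
    _ = ∫ x, 𝓕 (Φ : V → ℂ) x • g x := hflip.symm
    _ = ∫ x, (𝓕 Φ) x • hg2.toLp g x := by
      refine integral_congr_ae ?_
      filter_upwards [hg2.coeFn_toLp] with x hx
      rw [hx, SchwartzMap.fourier_coe]
    _ = ∫ x, φ x • (𝓕 (hg2.toLp g) : Lp (α := V) F 2 volume) x := by rw [hdual, hΦ]

lemma eLpNorm_two_fourier (hg : Integrable g) (hg2 : MemLp g 2) :
    eLpNorm (𝓕 g) 2 = eLpNorm g 2 := by
  have hnorm := Lp.norm_fourier_eq (hg2.toLp g)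
  rw [← enorm_eq_iff_norm_eq, Lp.enorm_def, Lp.enorm_def] at hnorm
  rwa [← eLpNorm_congr_ae (fourier_ae_eq_fourier_toLp hg hg2),
    eLpNorm_congr_ae hg2.coeFn_toLp] at hnorm

lemma volume_le_enorm_fourier_le {E : Set V} (hE : MeasurableSet E) (hg : Integrable g)
    {t : ℝ≥0∞} (ht0 : t ≠ 0) (ht : t ≠ ⊤) (htail : ∫⁻ w in Eᶜ, ‖g w‖ₑ ≤ t / 2) :
    volume {ξ | t ≤ ‖𝓕 g ξ‖ₑ} ≤ (t / 2)⁻¹ ^ 2 * ∫⁻ w in E, ‖g w‖ₑ ^ 2 := by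
  have hgE : Integrable (E.indicator g) := hg.indicator hE
  have hsq : eLpNorm (E.indicator g) 2 ^ 2 = ∫⁻ w in E, ‖g w‖ₑ ^ 2 := by
    have := eLpNorm_nnreal_pow_eq_lintegral (f := g) (μ := volume.restrict E) (p := 2) two_ne_zero
    simpa [eLpNorm_indicator_eq_eLpNorm_restrict hE] using this
  rw [← hsq]
  by_cases hfin : eLpNorm (E.indicator g) 2 = ⊤
  · have hne : (t / 2)⁻¹ ^ 2 ≠ 0 :=
      pow_ne_zero 2 (ENNReal.inv_ne_zero.2 (ENNReal.div_ne_top ht two_ne_zero))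
    rw [hfin, ENNReal.top_pow two_ne_zero, ENNReal.mul_top hne]
    exact le_top
  have hsub : volume {ξ | t ≤ ‖𝓕 g ξ‖ₑ} ≤ volume {ξ | t / 2 ≤ ‖𝓕 (E.indicator g) ξ‖ₑ} :=
    measure_mono fun ξ => half_le_enorm_fourier_indicator hE hg ht htail
  have hchebyshev := meas_ge_le_mul_pow_eLpNorm_enorm volume two_ne_zero ENNReal.ofNat_ne_top
    (continuous_fourier_of_integrable hgE).aestronglyMeasurable
    (ε := t / 2) (ENNReal.div_ne_zero.2 ⟨ht0, ENNReal.ofNat_ne_top⟩) (by simp)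
  rw [eLpNorm_two_fourier hgE ⟨hgE.aestronglyMeasurable, lt_top_iff_ne_top.2 hfin⟩,
    ENNReal.toReal_ofNat, ENNReal.rpow_two, ENNReal.rpow_two] at hchebyshev
  exact hsub.trans hchebyshev

lemma volume_le_enorm_fourier_mul_rpow_le {E : Set V} (hE : MeasurableSet E) (hg : Integrable g)
    {s t : ℝ} (ht : 0 < t) (htail : ∫⁻ w in Eᶜ, ‖g w‖ₑ ≤ ENNReal.ofReal t / 2) :
    volume {ξ | ENNReal.ofReal t ≤ ‖𝓕 g ξ‖ₑ} * ENNReal.ofReal (t ^ (s - 1)) ≤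
      4 * ∫⁻ w, E.indicator
        (fun w => ENNReal.ofReal (‖g w‖ ^ 2) * ENNReal.ofReal (t ^ (s - 3))) w := by
  have hpow : (ENNReal.ofReal t / 2)⁻¹ ^ 2 * ENNReal.ofReal (t ^ (s - 1)) =
      4 * ENNReal.ofReal (t ^ (s - 3)) := by
    rw [← ENNReal.ofReal_ofNat 2, ← ENNReal.ofReal_ofNat 4, ← ENNReal.ofReal_div_of_pos two_pos,
      ← ENNReal.ofReal_inv_of_pos (by positivity), ← ENNReal.ofReal_pow (by positivity),
      ← ENNReal.ofReal_mul (by positivity), ← ENNReal.ofReal_mul (by positivity)]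
    have hsplit : t ^ (s - 1) = t ^ (s - 3) * t ^ 2 := by
      rw [← Real.rpow_natCast t 2, ← Real.rpow_add ht]
      congr 1
      norm_num
      ring
    rw [hsplit]
    congr 1
    field_simp
    norm_num
  have hsq (w : V) : ENNReal.ofReal (‖g w‖ ^ 2) = ‖g w‖ₑ ^ 2 := by
    rw [ENNReal.ofReal_pow (norm_nonneg _), ofReal_norm]
  simp_rw [lintegral_indicator hE, lintegral_mul_const' _ _ ENNReal.ofReal_ne_top, hsq]
  calc _ ≤ ((ENNReal.ofReal t / 2)⁻¹ ^ 2 * ∫⁻ w in E, ‖g w‖ₑ ^ 2) *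
          ENNReal.ofReal (t ^ (s - 1)) := by
        gcongr
        exact volume_le_enorm_fourier_le hE hg (by simpa using ht) ENNReal.ofReal_ne_top htail
    _ = 4 * ((∫⁻ w in E, ‖g w‖ₑ ^ 2) * ENNReal.ofReal (t ^ (s - 3))) := by
        rw [mul_right_comm, hpow]; ring

-- Marcinkiewicz interpolation: at height `t` cut `g` where `t ‖g‖ ^ (p - 1) = 2 A`. The large
-- values contribute at most `t / 2` to `𝓕 g` by the `L¹` bound, and Plancherel controls the rest.
lemma lintegral_enorm_fourier_rpow_le {p s A : ℝ} (hps : p.HolderConjugate s) (hs : 2 < s)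
    (hA : 0 < A) (hg : Integrable g) (hgm : StronglyMeasurable g)
    (hgA : ∫⁻ w, ‖g w‖ₑ ^ p = ENNReal.ofReal A) :
    ∫⁻ ξ, ‖𝓕 g ξ‖ₑ ^ s ≤ ENNReal.ofReal (s * 2 ^ s / (s - 2)) * ENNReal.ofReal A ^ (s - 1) := by
  have hnorm : Measurable fun w => ‖g w‖ := hgm.norm.measurable
  set E : ℝ → Set V := fun t => {w | t * ‖g w‖ ^ (p - 1) ≤ 2 * A}
  have hE (t : ℝ) : MeasurableSet (E t) :=
    measurableSet_le (by fun_prop) measurable_const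
  set u : ℝ → V → ℝ≥0∞ := fun t =>
    (E t).indicator fun w => ENNReal.ofReal (‖g w‖ ^ 2) * ENNReal.ofReal (t ^ (s - 3))
  have hu : Measurable (Function.uncurry u) := by
    have hnorm' : Measurable fun x : ℝ × V => ‖g x.2‖ := hnorm.comp measurable_snd
    have hset : MeasurableSet {x : ℝ × V | x.1 * ‖g x.2‖ ^ (p - 1) ≤ 2 * A} :=
      measurableSet_le (by fun_prop) measurable_const
    exact Measurable.indicator (f := fun x : ℝ × V =>
      ENNReal.ofReal (‖g x.2‖ ^ 2) * ENNReal.ofReal (x.1 ^ (s - 3))) (by fun_prop) hset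
  have hpoint (w : V) : ∫⁻ t in Set.Ioi 0, u t w ≤
      ENNReal.ofReal ((2 * A) ^ (s - 2) / (s - 2)) * ‖g w‖ₑ ^ p := by
    rw [← ofReal_norm, ENNReal.ofReal_rpow_of_nonneg (norm_nonneg _) hps.nonneg]
    exact lintegral_indicator_mul_rpow_le hps hs (by positivity) (norm_nonneg (g w))
  calc ∫⁻ ξ, ‖𝓕 g ξ‖ₑ ^ s
      = ENNReal.ofReal s * ∫⁻ t in Set.Ioi 0,
          volume {ξ | ENNReal.ofReal t ≤ ‖𝓕 g ξ‖ₑ} * ENNReal.ofReal (t ^ (s - 1)) :=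
        lintegral_enorm_rpow_eq_lintegral_meas_le_mul
          (continuous_fourier_of_integrable hg).aestronglyMeasurable (by linarith)
    _ ≤ ENNReal.ofReal s * ∫⁻ t in Set.Ioi 0, 4 * ∫⁻ w, u t w := by
        gcongr ENNReal.ofReal s * ?_
        exact setLIntegral_mono' measurableSet_Ioi fun t ht =>
          volume_le_enorm_fourier_mul_rpow_le (hE t) hg ht
            (setLIntegral_enorm_compl_le hgm hA hgA hps.pos ht)
    _ = ENNReal.ofReal s * (4 * ∫⁻ w, ∫⁻ t in Set.Ioi 0, u t w) := by
        rw [lintegral_const_mul' _ _ ENNReal.ofNat_ne_top, lintegral_lintegral_swap hu.aemeasurable]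
    _ ≤ ENNReal.ofReal s * (4 * (ENNReal.ofReal ((2 * A) ^ (s - 2) / (s - 2)) *
          ENNReal.ofReal A)) := by
        rw [← hgA, ← lintegral_const_mul' _ _ ENNReal.ofReal_ne_top]
        gcongr
        exact hpoint _
    _ = ENNReal.ofReal (s * 2 ^ s / (s - 2)) * ENNReal.ofReal A ^ (s - 1) :=
        ofReal_mul_four_mul_rpow_div hs hA

lemma eLpNorm_fourier_le {p s : ℝ} (hps : p.HolderConjugate s) (hs : 2 < s) (hg : Integrable g) :
    eLpNorm (𝓕 g) (ENNReal.ofReal s) ≤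
      ENNReal.ofReal (s * 2 ^ s / (s - 2)) ^ (1 / s) * eLpNorm g (ENNReal.ofReal p) := by
  have hs0 : 0 < s := by linarith
  have hC : ENNReal.ofReal (s * 2 ^ s / (s - 2)) ^ (1 / s) ≠ 0 := by
    have : 0 < s - 2 := by linarith
    refine (ENNReal.rpow_pos (ENNReal.ofReal_pos.2 ?_) ENNReal.ofReal_ne_top).ne'
    positivity
  have hp : ENNReal.ofReal p ≠ 0 := (ENNReal.ofReal_pos.2 hps.pos).ne'
  rcases eq_or_ne (eLpNorm g (ENNReal.ofReal p)) ⊤ with htop | htop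
  · rw [htop, ENNReal.mul_top hC]
    exact le_top
  rcases eq_or_ne (eLpNorm g (ENNReal.ofReal p)) 0 with hzero | hzero
  · have hae : g =ᵐ[volume] 0 := (eLpNorm_eq_zero_iff hg.aestronglyMeasurable hp).1 hzero
    have hfourier : 𝓕 g = 0 := funext fun ξ => by
      rw [Real.fourier_congr_ae hae, Real.fourier_eq]
      simp
    rw [hfourier, eLpNorm_zero]
    exact zero_le
  have hgm := hg.aestronglyMeasurable.stronglyMeasurable_mk
  have hae := hg.aestronglyMeasurable.ae_eq_mk
  set f := hg.aestronglyMeasurable.mk g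
  have hfourier : 𝓕 g = 𝓕 f := funext fun ξ => Real.fourier_congr_ae hae ξ
  rw [eLpNorm_congr_ae hae] at htop hzero ⊢
  set N := eLpNorm f (ENNReal.ofReal p)
  have hNp : N ^ p ≠ ⊤ := ENNReal.rpow_ne_top_of_nonneg hps.nonneg htop
  have hNp0 : 0 < N ^ p := ENNReal.rpow_pos (pos_iff_ne_zero.2 hzero) htop
  have hmain := lintegral_enorm_fourier_rpow_le hps hs (ENNReal.toReal_pos hNp0.ne' hNp)
    (hg.congr hae) hgm
    ((eLpNorm_ofReal_rpow hps.pos f).symm.trans (ENNReal.ofReal_toReal hNp).symm)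
  rw [ENNReal.ofReal_toReal hNp, ← eLpNorm_ofReal_rpow hs0, ← ENNReal.rpow_mul] at hmain
  have hexp : p * (s - 1) * (1 / s) = 1 := by
    rw [mul_sub, mul_one, hps.mul_eq_add, add_sub_cancel_left, mul_one_div_cancel hs0.ne']
  have hroot := ENNReal.rpow_le_rpow hmain (one_div_nonneg.2 hs0.le)
  rwa [ENNReal.mul_rpow_of_nonneg _ _ (one_div_nonneg.2 hs0.le), ← ENNReal.rpow_mul,
    ← ENNReal.rpow_mul, hexp, mul_one_div_cancel hs0.ne', ENNReal.rpow_one, ENNReal.rpow_one,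
    ← hfourier] at hroot

end HausdorffYoung

lemma setLIntegral_ball_enorm_inv_rpow_ne_top {p : ℝ} (hp0 : 0 ≤ p) (hp : p < 2) (R : ℝ) :
    ∫⁻ u in Metric.ball (0 : ℂ) R, ‖u⁻¹‖ₑ ^ p ≠ ⊤ := by
  have hint : IntegrableOn (fun u : ℂ => ‖u⁻¹‖ ^ p) (Metric.ball 0 R) := by
    refine integrableOn_ball_of_norm_le_rpow (C := 1) (α := p) (by simp) (by simpa using hp)
      (Filter.Eventually.of_forall fun u => ?_) (by fun_prop)
    rw [norm_inv, Real.norm_of_nonneg (by positivity), Real.inv_rpow (norm_nonneg _),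
      Real.rpow_neg (norm_nonneg _), one_mul]
  refine ne_of_eq_of_ne (lintegral_congr fun u => ?_) hint.2.ne
  rw [← ofReal_norm, ENNReal.ofReal_rpow_of_nonneg (norm_nonneg _) hp0,
    Real.enorm_of_nonneg (by positivity)]

lemma exists_setLIntegral_enorm_inv_sub_rpow_le {p : ℝ} (hp0 : 0 ≤ p) (hp : p < 2) {S : Set ℂ}
    (hS : volume S ≠ ⊤) :
    ∃ D ≠ ⊤, ∀ z : ℂ, ∫⁻ w in S, ‖(z - w)⁻¹‖ₑ ^ p ≤ D := by
  refine ⟨(∫⁻ u in Metric.ball (0 : ℂ) 1, ‖u⁻¹‖ₑ ^ p) + volume S, ENNReal.add_ne_top.2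
    ⟨setLIntegral_ball_enorm_inv_rpow_ne_top hp0 hp 1, hS⟩, fun z => ?_⟩
  have hsplit (u : ℂ) : ‖u⁻¹‖ₑ ^ p ≤ (Metric.ball 0 1).indicator (fun u => ‖u⁻¹‖ₑ ^ p) u + 1 := by
    by_cases hu : u ∈ Metric.ball (0 : ℂ) 1
    · rw [Set.indicator_of_mem hu]
      exact le_self_add
    · have hu1 : ‖u⁻¹‖ₑ ≤ 1 := by
        rw [← ofReal_norm, ENNReal.ofReal_le_one, norm_inv]
        exact inv_le_one_of_one_le₀ (by simpa using hu)
      exact (ENNReal.rpow_le_one hu1 hp0).trans le_add_self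
  calc ∫⁻ w in S, ‖(z - w)⁻¹‖ₑ ^ p
      ≤ ∫⁻ w in S, ((Metric.ball 0 1).indicator (fun u => ‖u⁻¹‖ₑ ^ p) (z - w) + 1) :=
        lintegral_mono fun w => hsplit (z - w)
    _ = (∫⁻ w in S, (Metric.ball 0 1).indicator (fun u => ‖u⁻¹‖ₑ ^ p) (z - w)) + volume S := by
        rw [lintegral_add_right _ measurable_const, setLIntegral_one]
    _ ≤ (∫⁻ w, (Metric.ball 0 1).indicator (fun u => ‖u⁻¹‖ₑ ^ p) (z - w)) + volume S := by
        gcongr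
        exact Measure.restrict_le_self
    _ = (∫⁻ u in Metric.ball (0 : ℂ) 1, ‖u⁻¹‖ₑ ^ p) + volume S := by
        rw [lintegral_sub_left_eq_self ((Metric.ball 0 1).indicator fun u => ‖u⁻¹‖ₑ ^ p) z,
          lintegral_indicator measurableSet_ball]

lemma map_add_I_mul_map_mul_I (L : ℂ →L[ℝ] ℂ) (e : ℂ) :
    L e + I * L (e * I) = conj e * (L 1 + I * L I) := by
  have he : e = e.re • (1 : ℂ) + e.im • I := by simp
  have heI : e * I = e.re • I + (-e.im) • (1 : ℂ) := by apply Complex.ext <;> simp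
  have hconj : conj e = e.re - e.im * I := by apply Complex.ext <;> simp
  rw [hconj, heI]
  nth_rewrite 1 [he]
  rw [map_add, map_add, map_smul, map_smul, map_smul, map_smul]
  simp only [real_smul]
  push_cast
  linear_combination (e.im : ℂ) * L I * I_sq

lemma wDbar_comp_of_hasDerivAt {f g : ℂ → ℂ} {g' ζ : ℂ} (hf : DifferentiableAt ℝ f (g ζ))
    (hg : HasDerivAt g g' ζ) : wDbar (f ∘ g) ζ = conj g' * wDbar f (g ζ) := by
  have hcomp := hf.hasFDerivAt.comp ζ (hg.hasFDerivAt.restrictScalars ℝ)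
  have happ (e : ℂ) : fderiv ℝ (f ∘ g) ζ e = fderiv ℝ f (g ζ) (e * g') := by
    rw [hcomp.fderiv]; simp [mul_comm]
  rw [wDbar, wDbar, happ, happ, one_mul, mul_comm I g', map_add_I_mul_map_mul_I, mul_div_assoc]

/-- The solid Cauchy transform `(1/π) ∫ g(w)/(z-w) dw` over the plane, inverting `wDbar` on
functions vanishing at infinity. -/
noncomputable def cauchyTransform (g : ℂ → ℂ) (z : ℂ) : ℂ :=
  (π : ℂ)⁻¹ * ∫ w, g w * (z - w)⁻¹

section CauchyPompeiu

variable {f h : ℂ → ℂ}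

-- The Stokes formula on an annulus, written on a rectangle in the logarithmic coordinate `t + iθ`.
lemma integral_integral_exp_eq_sub (hf : Differentiable ℝ f) (hh : Continuous h)
    (hfh : ∀ z, wDbar f z = h z) (z : ℂ) (a b : ℝ) :
    ∫ t in a..b, ∫ θ in -π..π, 2 * (conj (exp (t + θ * I)) * h (z + exp (t + θ * I))) =
      (∫ θ in -π..π, f (z + exp (b + θ * I))) - ∫ θ in -π..π, f (z + exp (a + θ * I)) := by
  set F : ℂ → ℂ := f ∘ fun ζ => z + exp ζ with hF
  have hFdiff : Differentiable ℝ F := hf.comp (by fun_prop)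
  have hdbar (ζ : ℂ) : I • fderiv ℝ F ζ 1 - fderiv ℝ F ζ I =
      I * (2 * (conj (exp ζ) * h (z + exp ζ))) := by
    rw [← hfh, ← wDbar_comp_of_hasDerivAt (hf _) ((hasDerivAt_exp ζ).const_add z), wDbar,
      smul_eq_mul]
    linear_combination (-fderiv ℝ F ζ I) * I_sq
  have hperiodic (t : ℝ) : F (t + (π : ℝ) * I) = F (t + (-π : ℝ) * I) := by
    simp [hF, exp_add, exp_neg, exp_pi_mul_I]
  have hint : IntegrableOn (fun ζ => I • fderiv ℝ F ζ 1 - fderiv ℝ F ζ I)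
      (Set.uIcc a b ×ℂ Set.uIcc (-π) π) := by
    simp_rw [hdbar]
    have hcont : Continuous fun ζ => I * (2 * (conj (exp ζ) * h (z + exp ζ))) := by
      have := continuous_conj
      fun_prop
    exact hcont.continuousOn.integrableOn_compact (isCompact_uIcc.reProdIm isCompact_uIcc)
  have hstokes := integral_boundary_rect_of_differentiableOn_real F ⟨a, -π⟩ ⟨b, π⟩
    hFdiff.differentiableOn hint
  simp only [hdbar, hperiodic, sub_self, zero_add, intervalIntegral.integral_const_mul] at hstokes ⊢
  rw [← smul_sub, smul_eq_mul] at hstokes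
  exact (mul_left_cancel₀ I_ne_zero hstokes).symm

lemma continuous_integral_conj_exp_mul_circleMap (hh : Continuous h) (z : ℂ) :
    Continuous fun ρ : ℝ => ∫ θ in -π..π, 2 * (conj (exp (θ * I)) * h (circleMap z ρ θ)) := by
  apply intervalIntegral.continuous_parametric_intervalIntegral_of_continuous'
  have := continuous_conj
  unfold Function.uncurry circleMap
  fun_prop

lemma integral_integral_circleMap_eq_sub (hf : Differentiable ℝ f) (hh : Continuous h)
    (hfh : ∀ z, wDbar f z = h z) (z : ℂ) {r R : ℝ} (hr : 0 < r) (hR : 0 < R) :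
    ∫ ρ in r..R, ∫ θ in -π..π, 2 * (conj (exp (θ * I)) * h (circleMap z ρ θ)) =
      (∫ θ in -π..π, f (circleMap z R θ)) - ∫ θ in -π..π, f (circleMap z r θ) := by
  have hlog (t θ : ℝ) : z + exp (t + θ * I) = circleMap z (Real.exp t) θ := by
    rw [circleMap, exp_add, ofReal_exp]
  have hcont := continuous_integral_conj_exp_mul_circleMap hh z
  have hsubst := intervalIntegral.integral_deriv_smul_comp (a := Real.log r) (b := Real.log R)
    (fun t _ => Real.hasDerivAt_exp t) Real.continuous_exp.continuousOn hcont
  have hstokes := integral_integral_exp_eq_sub hf hh hfh z (Real.log r) (Real.log R)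
  simp only [hlog, Real.exp_log hr, Real.exp_log hR] at hsubst hstokes
  rw [← hsubst, ← hstokes]
  refine intervalIntegral.integral_congr fun t _ => ?_
  simp only [Function.comp_apply]
  rw [← intervalIntegral.integral_smul]
  refine intervalIntegral.integral_congr fun θ _ => ?_
  simp only [exp_add, map_mul, real_smul, ← ofReal_exp, conj_ofReal]
  ring

lemma hasDerivAt_integral_circleMap (hf : Differentiable ℝ f) (hh : Continuous h)
    (hfh : ∀ z, wDbar f z = h z) (z : ℂ) {ρ : ℝ} (hρ : 0 < ρ) :
    HasDerivAt (fun r : ℝ => ∫ θ in -π..π, f (circleMap z r θ))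
      (∫ θ in -π..π, 2 * (conj (exp (θ * I)) * h (circleMap z ρ θ))) ρ := by
  have hcont := continuous_integral_conj_exp_mul_circleMap hh z
  have hprim := (hcont.integral_hasStrictDerivAt ρ ρ).hasDerivAt.add_const
    (∫ θ in -π..π, f (circleMap z ρ θ))
  refine hprim.congr_of_eventuallyEq ?_
  filter_upwards [Ioi_mem_nhds hρ] with R hR
  rw [integral_integral_circleMap_eq_sub hf hh hfh z hρ hR, sub_add_cancel]

lemma eventually_atTop_forall_circleMap {P : ℂ → Prop} (hP : ∀ᶠ w in Filter.cocompact ℂ, P w)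
    (z : ℂ) : ∀ᶠ ρ in Filter.atTop, ∀ θ, P (circleMap z ρ θ) := by
  rw [← Metric.cobounded_eq_cocompact] at hP
  obtain ⟨T, -, hT⟩ := (Metric.hasBasis_cobounded_compl_closedBall z).mem_iff.1 hP
  filter_upwards [Filter.eventually_gt_atTop T] with ρ hρ θ
  refine hT fun hmem => hρ.not_ge ?_
  rw [Metric.mem_closedBall, dist_eq_norm, circleMap_sub_center, norm_circleMap_zero] at hmem
  exact (le_abs_self ρ).trans hmem

lemma tendsto_integral_circleMap_atTop (hf : Filter.Tendsto f (Filter.cocompact ℂ) (nhds 0))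
    (z : ℂ) :
    Filter.Tendsto (fun ρ => ∫ θ in -π..π, f (circleMap z ρ θ)) Filter.atTop (nhds 0) := by
  rw [NormedAddGroup.tendsto_nhds_zero] at hf ⊢
  intro ε hε
  filter_upwards [eventually_atTop_forall_circleMap (hf (ε / 7) (by positivity)) z] with ρ hρ
  calc ‖∫ θ in -π..π, f (circleMap z ρ θ)‖
    _ ≤ ε / 7 * |π - -π| :=
      intervalIntegral.norm_integral_le_of_norm_le_const fun θ _ => (hρ θ).le
    _ < ε := by
      rw [abs_of_pos (by linarith [Real.pi_pos])]
      nlinarith [Real.pi_lt_d2]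

lemma integrableOn_conj_exp_mul_circleMap (hh : Continuous h) (hsupp : HasCompactSupport h)
    (z : ℂ) :
    IntegrableOn (fun p : ℝ × ℝ => 2 * (conj (exp (p.2 * I)) * h (circleMap z p.1 p.2)))
      (Set.Ioi 0 ×ˢ Set.Ioo (-π) π) := by
  have hcont : Continuous fun p : ℝ × ℝ =>
      2 * (conj (exp (p.2 * I)) * h (circleMap z p.1 p.2)) := by
    have := continuous_conj
    unfold circleMap
    fun_prop
  have hzero : ∀ᶠ w in Filter.cocompact ℂ, h w = 0 := by
    rw [← Filter.coclosedCompact_eq_cocompact]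
    exact hasCompactSupport_iff_eventuallyEq.1 hsupp
  obtain ⟨T, hT⟩ := (eventually_atTop_forall_circleMap hzero z).exists_forall_of_atTop
  have hK : IsCompact (Set.Icc 0 T ×ˢ Set.Icc (-π) π) := isCompact_Icc.prod isCompact_Icc
  refine (hcont.continuousOn.integrableOn_compact hK).of_forall_sdiff_eq_zero
    (measurableSet_Ioi.prod measurableSet_Ioo) ?_
  rintro ⟨ρ, θ⟩ ⟨⟨hρ, hθ⟩, hout⟩
  have hρT : T ≤ ρ := by
    by_contra! hlt
    exact hout ⟨⟨le_of_lt hρ, hlt.le⟩, Set.Ioo_subset_Icc_self hθ⟩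
  simp [hT ρ hρT θ]

lemma smul_mul_inv_polarCoord_symm (z : ℂ) {p : ℝ × ℝ} (hp : p.1 ≠ 0) :
    p.1 • (h (z + Complex.polarCoord.symm p) * (z - (z + Complex.polarCoord.symm p))⁻¹) =
      -2⁻¹ * (2 * (conj (exp (p.2 * I)) * h (circleMap z p.1 p.2))) := by
  have hsymm : Complex.polarCoord.symm p = p.1 * exp (p.2 * I) := by
    rw [Complex.polarCoord_symm_apply, exp_mul_I, ofReal_cos, ofReal_sin]
  have hconj : conj (exp (p.2 * I)) = (exp (p.2 * I))⁻¹ := by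
    rw [← exp_conj, ← exp_neg]; simp
  have hp' : (p.1 : ℂ) ≠ 0 := ofReal_ne_zero.2 hp
  rw [hsymm, hconj, circleMap, real_smul, sub_add_cancel_left]
  field_simp [exp_ne_zero]

lemma cauchyTransform_eq_integral_Ioi (hh : Continuous h) (hsupp : HasCompactSupport h) (z : ℂ) :
    cauchyTransform h z = -(2 * π : ℂ)⁻¹ *
      ∫ ρ in Set.Ioi (0 : ℝ), ∫ θ in Set.Ioo (-π) π,
        2 * (conj (exp (θ * I)) * h (circleMap z ρ θ)) := by
  have hmeas : MeasurableSet (Set.Ioi (0 : ℝ) ×ˢ Set.Ioo (-π) π) :=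
    measurableSet_Ioi.prod measurableSet_Ioo
  have hint := integrableOn_conj_exp_mul_circleMap hh hsupp z
  rw [Measure.volume_eq_prod] at hint
  rw [cauchyTransform, ← integral_add_left_eq_self _ z, ← Complex.integral_comp_polarCoord_symm,
    polarCoord_target, setIntegral_congr_fun hmeas fun p hp =>
      smul_mul_inv_polarCoord_symm z (ne_of_gt hp.1), integral_const_mul, Measure.volume_eq_prod,
    setIntegral_prod _ hint, mul_inv]
  ring

theorem eq_cauchyTransform_of_wDbar_eq (hf : Differentiable ℝ f) (hh : Continuous h)
    (hsupp : HasCompactSupport h) (hfh : ∀ z, wDbar f z = h z)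
    (hlim : Filter.Tendsto f (Filter.cocompact ℂ) (nhds 0)) : f = cauchyTransform h := by
  ext z
  set a : ℝ → ℂ := fun ρ => ∫ θ in -π..π, 2 * (conj (exp (θ * I)) * h (circleMap z ρ θ))
  set b : ℝ → ℂ := fun ρ => ∫ θ in -π..π, f (circleMap z ρ θ) with hb
  have hbcont : Continuous b := by
    apply intervalIntegral.continuous_parametric_intervalIntegral_of_continuous'
    have := hf.continuous
    unfold Function.uncurry circleMap
    fun_prop
  have hderiv (ρ : ℝ) (hρ : ρ ∈ Set.Ioi 0) : HasDerivAt b (a ρ) ρ :=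
    hasDerivAt_integral_circleMap hf hh hfh z hρ
  have hb0 : b 0 = 2 * π * f z := by
    simp only [hb, circleMap_zero_radius, Function.const_apply, intervalIntegral.integral_const,
      real_smul]
    push_cast
    ring
  have hIoo (ρ : ℝ) : a ρ = ∫ θ in Set.Ioo (-π) π,
      2 * (conj (exp (θ * I)) * h (circleMap z ρ θ)) := by
    rw [← integral_Ioc_eq_integral_Ioo, ← intervalIntegral.integral_of_le
      (by linarith [Real.pi_pos])]
  have haint : IntegrableOn a (Set.Ioi 0) := by
    have hint := integrableOn_conj_exp_mul_circleMap hh hsupp z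
    rw [Measure.volume_eq_prod, IntegrableOn, ← Measure.prod_restrict] at hint
    exact hint.integral_prod_left.congr (.of_forall fun ρ => (hIoo ρ).symm)
  simp_rw [cauchyTransform_eq_integral_Ioi hh hsupp z, ← hIoo]
  rw [integral_Ioi_of_hasDerivAt_of_tendsto hbcont.continuousWithinAt hderiv haint
    (tendsto_integral_circleMap_atTop hlim z), hb0]
  have : (π : ℂ) ≠ 0 := ofReal_ne_zero.2 Real.pi_ne_zero
  field_simp
  ring

end CauchyPompeiu

section Decay

lemma uniformContinuous_of_isHolder {ε : ℝ} {f : ℂ → ℂ} (hε : 0 < ε) (hf : IsHolder ε f) :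
    UniformContinuous f := by
  obtain ⟨C, hC, hbound⟩ := hf
  have hholder : HolderWith C.toNNReal ε.toNNReal f := by
    intro z z'
    rw [edist_eq_enorm_sub, edist_eq_enorm_sub, ← ofReal_norm, ← ofReal_norm,
      Real.coe_toNNReal ε hε.le, ENNReal.ofReal_rpow_of_nonneg (norm_nonneg _) hε.le,
      ← ENNReal.ofReal.eq_def, ← ENNReal.ofReal_mul hC]
    exact ENNReal.ofReal_le_ofReal (hbound z z')
  exact hholder.uniformContinuous (Real.toNNReal_pos.2 hε)

lemma tendsto_cocompact_zero_of_memLp {E F : Type*} [NormedAddCommGroup E] [ProperSpace E]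
    [MeasurableSpace E] [BorelSpace E] {μ : Measure E} [μ.IsAddHaarMeasure]
    [NormedAddCommGroup F] {f : E → F} {p : ℝ≥0∞} (hf : UniformContinuous f)
    (hp0 : p ≠ 0) (hp : p ≠ ⊤) (hfp : MemLp f p μ) :
    Filter.Tendsto f (Filter.cocompact E) (nhds 0) := by
  rw [NormedAddGroup.tendsto_nhds_zero]
  intro η hη
  obtain ⟨δ, hδ, hosc⟩ := Metric.uniformContinuous_iff.1 hf (η / 2) (by positivity)
  set S : Set E := {w | ENNReal.ofReal (η / 2) ≤ ‖f w‖ₑ}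
  have hSmeas : MeasurableSet S :=
    measurableSet_le measurable_const hf.continuous.enorm.measurable
  have hSfin : μ S ≠ ⊤ := by
    have := hfp.meas_ge_lt_top'_enorm hp0 hp (ε := ENNReal.ofReal (η / 2)) (by simpa using hη)
      (by simp)
    exact this.ne
  obtain ⟨K, -, hK, hKlt⟩ := hSmeas.exists_isCompact_sdiff_lt hSfin
    (Metric.measure_ball_pos μ (0 : E) hδ).ne'
  filter_upwards [(hK.cthickening (r := δ)).compl_mem_cocompact] with z hz
  by_contra! hlarge
  have hball : Metric.ball z δ ⊆ S \ K := by
    refine fun w hw => ⟨?_, fun hwK => hz ?_⟩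
    · have hclose := hosc hw
      rw [dist_eq_norm, norm_sub_rev] at hclose
      change ENNReal.ofReal (η / 2) ≤ ‖f w‖ₑ
      rw [← ofReal_norm]
      exact ENNReal.ofReal_le_ofReal (by linarith [norm_sub_norm_le (f z) (f w)])
    · exact Metric.mem_cthickening_of_dist_le z w δ K hwK (Metric.mem_ball'.1 hw).le
  rw [← Measure.addHaar_ball_center μ z δ] at hKlt
  exact hKlt.not_ge (measure_mono hball)

end Decay

/-- The unimodular exponential `e_{-k}(w) = exp(-i(kw + conj(kw)))` of the scattering literature. -/
noncomputable def planeWave (k w : ℂ) : ℂ :=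
  exp (-(I * (k * w + conj (k * w))))

lemma planeWave_eq_fourierChar (k w : ℂ) :
    planeWave k w = 𝐞 (-inner ℝ w ((π : ℝ)⁻¹ • conj k)) := by
  rw [planeWave, Real.fourierChar_apply, add_conj]
  have hinner : inner ℝ w (π⁻¹ • conj k) = π⁻¹ * (k * w).re := by
    rw [inner_smul_right, Complex.inner, ← map_mul, conj_re]
  rw [hinner]
  congr 1
  push_cast
  field_simp

lemma enorm_planeWave (k w : ℂ) : ‖planeWave k w‖ₑ = 1 := by
  rw [planeWave_eq_fourierChar, ← ofReal_norm, Circle.norm_coe, ENNReal.ofReal_one]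

lemma continuous_planeWave : Continuous fun p : ℂ × ℂ => planeWave p.1 p.2 := by
  unfold planeWave
  fun_prop

lemma planeWave_mul_conj (k w : ℂ) : planeWave k w * conj (planeWave k w) = 1 := by
  rw [mul_conj, normSq_eq_norm_sq, planeWave_eq_fourierChar, Circle.norm_coe]
  simp

lemma integral_planeWave_mul (g : ℂ → ℂ) (k : ℂ) :
    ∫ w, planeWave k w * g w = 𝓕 g ((π : ℝ)⁻¹ • conj k) := by
  simp_rw [Real.fourier_eq, Circle.smul_def, smul_eq_mul, planeWave_eq_fourierChar]

lemma hasFDerivAt_planeWave (k z : ℂ) :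
    HasFDerivAt (planeWave k) (planeWave k z • -(I • (ContinuousLinearMap.mul ℝ ℂ k +
      (conjCLE : ℂ →L[ℝ] ℂ).comp (ContinuousLinearMap.mul ℝ ℂ k)))) z :=
  (-(I • (ContinuousLinearMap.mul ℝ ℂ k +
    (conjCLE : ℂ →L[ℝ] ℂ).comp (ContinuousLinearMap.mul ℝ ℂ k)))).hasFDerivAt.cexp

lemma wDbar_conj {g : ℂ → ℂ} {z : ℂ} (hg : DifferentiableAt ℝ g z) :
    wDbar (fun w => conj (g w)) z = conj (wD g z) := by
  have hconj : HasFDerivAt (fun w => conj (g w)) ((conjCLE : ℂ →L[ℝ] ℂ).comp (fderiv ℝ g z)) z :=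
    (conjCLE : ℂ →L[ℝ] ℂ).hasFDerivAt.comp z hg.hasFDerivAt
  simp [wDbar, wD, hconj.fderiv, map_ofNat]

lemma wD_conj {g : ℂ → ℂ} {z : ℂ} (hg : DifferentiableAt ℝ g z) :
    wD (fun w => conj (g w)) z = conj (wDbar g z) := by
  have hconj : HasFDerivAt (fun w => conj (g w)) ((conjCLE : ℂ →L[ℝ] ℂ).comp (fderiv ℝ g z)) z :=
    (conjCLE : ℂ →L[ℝ] ℂ).hasFDerivAt.comp z hg.hasFDerivAt
  simp [wDbar, wD, hconj.fderiv, map_ofNat, sub_eq_add_neg]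

lemma wDbar_planeWave_mul (k : ℂ) {g : ℂ → ℂ} {z : ℂ} (hg : DifferentiableAt ℝ g z) :
    wDbar (fun w => planeWave k w * g w) z =
      planeWave k z * (wDbar g z - I * conj k * g z) := by
  have hmul := (hasFDerivAt_planeWave k z).mul hg.hasFDerivAt
  have heq : (fun w => planeWave k w * g w) = planeWave k * g := rfl
  rw [heq, wDbar, wDbar, hmul.fderiv]
  simp only [smul_add, neg_add_rev, smul_neg, add_apply, smul_apply, smul_eq_mul, neg_apply,
    ContinuousLinearMap.comp_apply, ContinuousLinearMap.mul_apply', mul_one,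
    ContinuousLinearEquiv.coe_coe, ContinuousAlgEquiv.coeCLE_apply, conjCAE_apply, map_mul, conj_I,
    mul_neg, neg_neg]
  linear_combination (-(1 / 2) * planeWave k z * g z * I * (k - conj k)) * I_sq

/-- `m` and `n` form a column of the matrix solution with spectral parameter `k`: they solve the
first-order system with potential `q` and tend to the column `(1, 0)` of the identity at
infinity. -/
structure IsNormalizedSolution (q : ℂ → ℂ) (k : ℂ) (m n : ℂ → ℂ) : Prop where
  differentiable_fst : Differentiable ℝ m
  differentiable_snd : Differentiable ℝ n
  wDbar_fst : ∀ z, wDbar m z = q z * n z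
  wD_snd : ∀ z, wD n z + I * k * n z = conj (q z) * m z
  tendsto_fst : Filter.Tendsto (fun z => m z - 1) (Filter.cocompact ℂ) (nhds 0)
  tendsto_snd : Filter.Tendsto n (Filter.cocompact ℂ) (nhds 0)

/-- The conjugate-linear operator `f ↦ C[q e_{-k} conj f]`, `C` the Cauchy transform. In terms of
it the system becomes the pair `m - 1 = T u`, `u = T m` with `u = e_{-k} conj n`. -/
noncomputable def conjCauchy (q : ℂ → ℂ) (k : ℂ) (f : ℂ → ℂ) : ℂ → ℂ :=
  cauchyTransform fun w => q w * (planeWave k w * conj (f w))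

namespace IsNormalizedSolution

variable {q m n : ℂ → ℂ} {k : ℂ}

lemma sub_one_eq (h : IsNormalizedSolution q k m n) (hq : Continuous q)
    (hsupp : HasCompactSupport q) :
    (fun z => m z - 1) = conjCauchy q k fun w => planeWave k w * conj (n w) := by
  have hwave (w : ℂ) : planeWave k w * conj (planeWave k w * conj (n w)) = n w := by
    rw [map_mul, conj_conj, ← mul_assoc, planeWave_mul_conj, one_mul]
  simp only [conjCauchy, hwave]
  refine eq_cauchyTransform_of_wDbar_eq (h.differentiable_fst.sub_const 1)
    (hq.mul h.differentiable_snd.continuous) hsupp.mul_right (fun z => ?_) h.tendsto_fst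
  rw [← h.wDbar_fst, wDbar, wDbar, fderiv_sub_const]

lemma planeWave_mul_conj_snd_eq (h : IsNormalizedSolution q k m n) (hq : Continuous q)
    (hsupp : HasCompactSupport q) :
    (fun w => planeWave k w * conj (n w)) = conjCauchy q k m := by
  have hconj : Differentiable ℝ fun w => conj (n w) :=
    (conjCLE : ℂ →L[ℝ] ℂ).differentiable.comp h.differentiable_snd
  have hcont : Continuous fun w => q w * (planeWave k w * conj (m w)) :=
    hq.mul ((continuous_planeWave.comp (Continuous.prodMk_right k)).mul
      (continuous_conj.comp h.differentiable_fst.continuous))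
  refine eq_cauchyTransform_of_wDbar_eq
    (fun w => (hasFDerivAt_planeWave k w).differentiableAt.mul (hconj w)) hcont hsupp.mul_right
    (fun z => ?_) ?_
  · have hwD := congrArg conj (h.wD_snd z)
    simp only [map_add, map_mul, conj_I, conj_conj] at hwD
    rw [wDbar_planeWave_mul k (hconj z), wDbar_conj (h.differentiable_snd z)]
    linear_combination planeWave k z * hwD
  · have hlim := h.tendsto_snd
    rw [tendsto_zero_iff_norm_tendsto_zero] at hlim ⊢
    have hnorm (w : ℂ) : ‖planeWave k w‖ = 1 := by
      rw [planeWave_eq_fourierChar, Circle.norm_coe]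
    simpa [hnorm] using hlim

end IsNormalizedSolution

lemma norm_inv_sub_inv_sq_le {𝕜 : Type*} [NormedField 𝕜] (u v : 𝕜) :
    ‖u⁻¹ - v⁻¹‖ ^ 2 ≤ ‖u - v‖ * (‖u⁻¹‖ ^ 3 + ‖v⁻¹‖ ^ 3) := by
  rcases eq_or_ne u 0 with rfl | hu
  · rcases eq_or_ne v 0 with rfl | hv
    · simp
    · have hv' : ‖v‖ ≠ 0 := norm_ne_zero_iff.2 hv
      simp only [inv_zero, zero_sub, norm_neg, norm_inv, norm_zero]
      field_simp
      simp
  rcases eq_or_ne v 0 with rfl | hv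
  · have hu' : ‖u‖ ≠ 0 := norm_ne_zero_iff.2 hu
    simp only [inv_zero, sub_zero, norm_inv, norm_zero]
    field_simp
    simp
  set x := ‖u⁻¹‖
  set y := ‖v⁻¹‖
  have hx : 0 ≤ x := norm_nonneg _
  have hy : 0 ≤ y := norm_nonneg _
  have hprod : ‖u⁻¹ - v⁻¹‖ = ‖u - v‖ * (x * y) := by
    rw [inv_sub_inv hu hv, norm_div, norm_sub_rev, norm_mul, div_eq_mul_inv, mul_inv,
      ← norm_inv, ← norm_inv]
  calc ‖u⁻¹ - v⁻¹‖ ^ 2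
    _ ≤ ‖u - v‖ * (x * y) * (x + y) := by
      rw [sq]
      exact mul_le_mul hprod.le (norm_sub_le _ _) (norm_nonneg _) (by positivity)
    _ = ‖u - v‖ * (x ^ 2 * y + x * y ^ 2) := by ring
    _ ≤ ‖u - v‖ * (x ^ 3 + y ^ 3) := by
      have hmix : x ^ 2 * y + x * y ^ 2 ≤ x ^ 3 + y ^ 3 := by
        nlinarith [mul_nonneg (add_nonneg hx hy) (sq_nonneg (x - y))]
      gcongr

lemma enorm_inv_sub_inv_le {𝕜 : Type*} [NormedField 𝕜] (u v : 𝕜) :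
    ‖u⁻¹ - v⁻¹‖ₑ ≤ ‖u - v‖ₑ ^ (1 / 2 : ℝ) * (‖u⁻¹‖ₑ ^ (3 / 2 : ℝ) + ‖v⁻¹‖ₑ ^ (3 / 2 : ℝ)) := by
  have hsq : ‖u⁻¹ - v⁻¹‖ₑ ^ 2 ≤ ‖u - v‖ₑ * (‖u⁻¹‖ₑ ^ 3 + ‖v⁻¹‖ₑ ^ 3) := by
    simp only [← ofReal_norm, ← ENNReal.ofReal_pow (norm_nonneg _)]
    rw [← ENNReal.ofReal_add (by positivity) (by positivity),
      ← ENNReal.ofReal_mul (norm_nonneg _)]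
    exact ENNReal.ofReal_le_ofReal (norm_inv_sub_inv_sq_le u v)
  have hroot (a : ℝ≥0∞) : (a ^ 3) ^ (1 / 2 : ℝ) = a ^ (3 / 2 : ℝ) := by
    rw [← ENNReal.rpow_natCast_mul]; norm_num
  calc ‖u⁻¹ - v⁻¹‖ₑ
    _ = (‖u⁻¹ - v⁻¹‖ₑ ^ 2) ^ (1 / 2 : ℝ) := by rw [← ENNReal.rpow_natCast_mul]; norm_num
    _ ≤ (‖u - v‖ₑ * (‖u⁻¹‖ₑ ^ 3 + ‖v⁻¹‖ₑ ^ 3)) ^ (1 / 2 : ℝ) := by gcongr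
    _ ≤ ‖u - v‖ₑ ^ (1 / 2 : ℝ) * ((‖u⁻¹‖ₑ ^ 3) ^ (1 / 2 : ℝ) + (‖v⁻¹‖ₑ ^ 3) ^ (1 / 2 : ℝ)) := by
      rw [ENNReal.mul_rpow_of_nonneg _ _ (by norm_num)]
      gcongr
      exact ENNReal.rpow_add_le_add_rpow _ _ (by norm_num) (by norm_num)
    _ = _ := by rw [hroot, hroot]

section KernelBounds

variable {q : ℂ → ℂ}

lemma exists_enorm_le_indicator_tsupport (hq : Continuous q) (hsupp : HasCompactSupport q) :
    ∃ Q ≠ ⊤, ∀ w, ‖q w‖ₑ ≤ (tsupport q).indicator (fun _ => Q) w := by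
  obtain ⟨Q, hQ⟩ := hsupp.exists_bound_of_continuous hq
  refine ⟨ENNReal.ofReal Q, ENNReal.ofReal_ne_top, fun w => ?_⟩
  by_cases hw : w ∈ tsupport q
  · rw [Set.indicator_of_mem hw, ← ofReal_norm]
    exact ENNReal.ofReal_le_ofReal (hQ w)
  · simp [image_eq_zero_of_notMem_tsupport hw]

lemma exists_lintegral_enorm_mul_inv_rpow_le (hq : Continuous q) (hsupp : HasCompactSupport q)
    {p : ℝ} (hp0 : 0 ≤ p) (hp : p < 2) :
    ∃ D ≠ ⊤, ∀ z, ∫⁻ w, ‖q w‖ₑ * ‖(z - w)⁻¹‖ₑ ^ p ≤ D := by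
  obtain ⟨Q, hQtop, hQ⟩ := exists_enorm_le_indicator_tsupport hq hsupp
  obtain ⟨D, hDtop, hD⟩ := exists_setLIntegral_enorm_inv_sub_rpow_le hp0 hp
    hsupp.isCompact.measure_ne_top
  refine ⟨Q * D, ENNReal.mul_ne_top hQtop hDtop, fun z => ?_⟩
  calc ∫⁻ w, ‖q w‖ₑ * ‖(z - w)⁻¹‖ₑ ^ p
    _ ≤ ∫⁻ w, (tsupport q).indicator (fun w => Q * ‖(z - w)⁻¹‖ₑ ^ p) w := by
      refine lintegral_mono fun w => ?_
      by_cases hw : w ∈ tsupport q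
      · have hqw := hQ w
        rw [Set.indicator_of_mem hw] at hqw ⊢
        gcongr
      · simp [image_eq_zero_of_notMem_tsupport hw]
    _ = Q * ∫⁻ w in tsupport q, ‖(z - w)⁻¹‖ₑ ^ p := by
      rw [lintegral_indicator (isClosed_tsupport q).measurableSet, lintegral_const_mul' _ _ hQtop]
    _ ≤ Q * D := by gcongr; exact hD z

lemma eventually_lintegral_enorm_mul_inv_sub_inv_le (hq : Continuous q)
    (hsupp : HasCompactSupport q) {η : ℝ≥0∞} (hη : η ≠ 0) :
    ∀ᶠ τ in nhds (0 : ℂ), ∀ z, ∫⁻ w, ‖q w‖ₑ * ‖(z - w)⁻¹ - (z + τ - w)⁻¹‖ₑ ≤ η := by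
  obtain ⟨D, hDtop, hD⟩ := exists_lintegral_enorm_mul_inv_rpow_le hq hsupp
    (p := 3 / 2) (by norm_num) (by norm_num)
  have hsmall : ∀ᶠ τ in nhds (0 : ℂ), ‖τ‖ₑ ^ (1 / 2 : ℝ) * (D + D) ≤ η := by
    have hlim : Filter.Tendsto (fun τ : ℂ => ‖τ‖ₑ ^ (1 / 2 : ℝ) * (D + D)) (nhds 0) (nhds 0) := by
      have hcont : Continuous fun τ : ℂ => ‖τ‖ₑ ^ (1 / 2 : ℝ) :=
        ENNReal.continuous_rpow_const.comp continuous_enorm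
      have hroot := hcont.tendsto 0
      simp only [enorm_zero, ENNReal.zero_rpow_of_pos (by norm_num : (0 : ℝ) < 1 / 2)] at hroot
      simpa using ENNReal.Tendsto.mul_const hroot (b := D + D) (.inr (by finiteness))
    exact hlim.eventually_le_const (pos_iff_ne_zero.2 hη)
  filter_upwards [hsmall] with τ hτ z
  refine le_trans ?_ hτ
  calc ∫⁻ w, ‖q w‖ₑ * ‖(z - w)⁻¹ - (z + τ - w)⁻¹‖ₑ
    _ ≤ ∫⁻ w, ‖τ‖ₑ ^ (1 / 2 : ℝ) * (‖q w‖ₑ * ‖(z - w)⁻¹‖ₑ ^ (3 / 2 : ℝ) +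
        ‖q w‖ₑ * ‖(z + τ - w)⁻¹‖ₑ ^ (3 / 2 : ℝ)) := by
      refine lintegral_mono fun w => ?_
      have hpt := enorm_inv_sub_inv_le (z - w) (z + τ - w)
      have hτ' : z - w - (z + τ - w) = -τ := by ring
      rw [hτ', enorm_neg] at hpt
      rw [← mul_add, mul_left_comm]
      gcongr
    _ ≤ ‖τ‖ₑ ^ (1 / 2 : ℝ) * (D + D) := by
      rw [lintegral_const_mul' _ _ (by finiteness), lintegral_add_left (by fun_prop)]
      gcongr <;> exact hD _

lemma enorm_sub_le_mul_indicator_tsupport {v w : ℂ} {ε : ℝ≥0∞} (h : ‖q v - q w‖ₑ ≤ ε) :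
    ‖q v - q w‖ₑ ≤ ε * ((tsupport q).indicator 1 v + (tsupport q).indicator 1 w) := by
  by_cases hv : v ∈ tsupport q
  · exact h.trans (le_mul_of_one_le_right' (by simp [hv]))
  by_cases hw : w ∈ tsupport q
  · exact h.trans (le_mul_of_one_le_right' (by simp [hw]))
  simp [image_eq_zero_of_notMem_tsupport hv, image_eq_zero_of_notMem_tsupport hw]

lemma eventually_lintegral_enorm_sub_translate_mul_inv_le (hq : Continuous q)
    (hsupp : HasCompactSupport q) {η : ℝ≥0∞} (hη : η ≠ 0) :
    ∀ᶠ τ in nhds (0 : ℂ), ∀ z, ∫⁻ v, ‖q v - q (v + τ)‖ₑ * ‖(z - v)⁻¹‖ₑ ≤ η := by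
  set S := tsupport q
  have hS : MeasurableSet S := (isClosed_tsupport q).measurableSet
  obtain ⟨D, hDtop, hD⟩ := exists_setLIntegral_enorm_inv_sub_rpow_le zero_le_one one_lt_two
    hsupp.isCompact.measure_ne_top
  simp only [ENNReal.rpow_one] at hD
  have hε : 0 < η / (D + D) := ENNReal.div_pos hη (by finiteness)
  obtain ⟨δ, hδ, hosc⟩ := EMetric.uniformContinuous_iff.1
    (hsupp.uniformContinuous_of_continuous hq) _ hε
  filter_upwards [Metric.eball_mem_nhds 0 hδ] with τ hτ z
  have hpt (v : ℂ) : ‖q v - q (v + τ)‖ₑ * ‖(z - v)⁻¹‖ₑ ≤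
      η / (D + D) * (S.indicator (fun v => ‖(z - v)⁻¹‖ₑ) v +
        S.indicator (fun v => ‖(z + τ - v)⁻¹‖ₑ) (v + τ)) := by
    have hq_osc : ‖q v - q (v + τ)‖ₑ ≤ η / (D + D) := by
      rw [← edist_eq_enorm_sub]
      refine (hosc ?_).le
      rwa [edist_comm, edist_eq_enorm_sub, add_sub_cancel_left, ← edist_zero_right]
    have hindicator := enorm_sub_le_mul_indicator_tsupport hq_osc
    calc ‖q v - q (v + τ)‖ₑ * ‖(z - v)⁻¹‖ₑ
      _ ≤ η / (D + D) * (S.indicator 1 v + S.indicator 1 (v + τ)) * ‖(z - v)⁻¹‖ₑ := by gcongr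
      _ = _ := by
        rw [mul_assoc, add_mul]
        congr 2
        · by_cases hv : v ∈ S <;> simp [hv]
        · by_cases hv : v + τ ∈ S <;> simp [hv]
  calc ∫⁻ v, ‖q v - q (v + τ)‖ₑ * ‖(z - v)⁻¹‖ₑ
    _ ≤ ∫⁻ v, η / (D + D) * (S.indicator (fun v => ‖(z - v)⁻¹‖ₑ) v +
        S.indicator (fun v => ‖(z + τ - v)⁻¹‖ₑ) (v + τ)) := lintegral_mono hpt
    _ = η / (D + D) * ((∫⁻ v in S, ‖(z - v)⁻¹‖ₑ) + ∫⁻ v in S, ‖(z + τ - v)⁻¹‖ₑ) := by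
      rw [lintegral_const_mul _ (by measurability), lintegral_add_left (by measurability),
        lintegral_add_right_eq_self (S.indicator fun v => ‖(z + τ - v)⁻¹‖ₑ) τ,
        lintegral_indicator hS, lintegral_indicator hS]
    _ ≤ η / (D + D) * (D + D) := by gcongr <;> exact hD _
    _ ≤ η := ENNReal.mul_le_of_le_div le_rfl

lemma eventually_lintegral_enorm_kernel_sub_translate_le (hq : Continuous q)
    (hsupp : HasCompactSupport q) {η : ℝ≥0∞} (hη : η ≠ 0) :
    ∀ᶠ τ in nhds (0 : ℂ), ∀ z,
      ∫⁻ v, ‖q v * (z - v)⁻¹ - q (v + τ) * (z - (v + τ))⁻¹‖ₑ ≤ η := by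
  have hη2 : η / 2 ≠ 0 := ENNReal.div_ne_zero.2 ⟨hη, ENNReal.ofNat_ne_top⟩
  filter_upwards [eventually_lintegral_enorm_sub_translate_mul_inv_le hq hsupp hη2,
    eventually_lintegral_enorm_mul_inv_sub_inv_le hq hsupp hη2] with τ hpot hker z
  have hshift : ∫⁻ v, ‖q (v + τ)‖ₑ * ‖(z - v)⁻¹ - (z - (v + τ))⁻¹‖ₑ ≤ η / 2 := by
    refine le_trans (le_of_eq ?_) (hker z)
    rw [← lintegral_add_right_eq_self (fun v => ‖q v‖ₑ * ‖(z - v)⁻¹ - (z + τ - v)⁻¹‖ₑ) τ]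
    refine lintegral_congr fun v => ?_
    rw [add_sub_add_right_eq_sub, enorm_sub_rev]
  calc ∫⁻ v, ‖q v * (z - v)⁻¹ - q (v + τ) * (z - (v + τ))⁻¹‖ₑ
    _ ≤ ∫⁻ v, (‖q v - q (v + τ)‖ₑ * ‖(z - v)⁻¹‖ₑ +
        ‖q (v + τ)‖ₑ * ‖(z - v)⁻¹ - (z - (v + τ))⁻¹‖ₑ) := by
      refine lintegral_mono fun v => ?_
      rw [← enorm_mul, ← enorm_mul]
      refine le_trans (le_of_eq ?_) (enorm_add_le _ _)
      congr 1
      ring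
    _ ≤ η / 2 + η / 2 := by
      rw [lintegral_add_left (by fun_prop)]
      exact add_le_add (hpot z) hshift
    _ = η := ENNReal.add_halves η

end KernelBounds

section CauchyTransform

variable {g : ℂ → ℂ}

lemma enorm_pi_inv_mul_le (c : ℂ) : ‖(π : ℂ)⁻¹ * c‖ₑ ≤ ‖c‖ₑ := by
  rw [← ofReal_norm, ← ofReal_norm, norm_mul, norm_inv, norm_real,
    Real.norm_of_nonneg Real.pi_nonneg]
  exact ENNReal.ofReal_le_ofReal (mul_le_of_le_one_left (norm_nonneg c)
    (inv_le_one_of_one_le₀ (by linarith [Real.pi_gt_three])))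

lemma enorm_cauchyTransform_le (g : ℂ → ℂ) (z : ℂ) :
    ‖cauchyTransform g z‖ₑ ≤ ∫⁻ w, ‖g w‖ₑ * ‖(z - w)⁻¹‖ₑ := by
  simp_rw [← enorm_mul]
  exact (enorm_pi_inv_mul_le _).trans (enorm_integral_le_lintegral_enorm _)

lemma integrable_mul_inv_sub (hg : Continuous g) (hsupp : HasCompactSupport g) (z : ℂ) :
    Integrable fun w => g w * (z - w)⁻¹ := by
  obtain ⟨D, hDtop, hD⟩ := exists_lintegral_enorm_mul_inv_rpow_le hg hsupp zero_le_one one_lt_two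
  refine ⟨by fun_prop, ?_⟩
  simpa [HasFiniteIntegral, enorm_mul] using (hD z).trans_lt (lt_top_iff_ne_top.2 hDtop)

lemma enorm_cauchyTransform_sub_le (hg : Continuous g) (hsupp : HasCompactSupport g) (z z' : ℂ) :
    ‖cauchyTransform g z - cauchyTransform g z'‖ₑ ≤
      ∫⁻ w, ‖g w‖ₑ * ‖(z - w)⁻¹ - (z' - w)⁻¹‖ₑ := by
  simp_rw [← enorm_mul, mul_sub]
  rw [cauchyTransform, cauchyTransform, ← mul_sub,
    ← integral_sub (integrable_mul_inv_sub hg hsupp z) (integrable_mul_inv_sub hg hsupp z')]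
  exact (enorm_pi_inv_mul_le _).trans (enorm_integral_le_lintegral_enorm _)

lemma continuous_cauchyTransform (hg : Continuous g) (hsupp : HasCompactSupport g) :
    Continuous (cauchyTransform g) := by
  refine continuous_iff_continuousAt.2 fun z => ?_
  rw [ContinuousAt, EMetric.tendsto_nhds]
  intro η hη
  obtain ⟨η', hη', hlt⟩ := exists_between hη
  have hshift : Filter.Tendsto (fun z' => z' - z) (nhds z) (nhds 0) := by
    simpa using (continuous_sub_right z).tendsto z
  filter_upwards [hshift.eventually
    (eventually_lintegral_enorm_mul_inv_sub_inv_le hg hsupp hη'.ne')] with z' hz'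
  rw [edist_comm, edist_eq_enorm_sub]
  refine ((enorm_cauchyTransform_sub_le hg hsupp z z').trans ?_).trans_lt hlt
  simpa only [add_sub_cancel] using hz' z

end CauchyTransform

section ConjCauchy

variable {q : ℂ → ℂ} {f : ℂ → ℂ} (k : ℂ)

lemma enorm_mul_planeWave_mul_conj (q f : ℂ → ℂ) (w : ℂ) :
    ‖q w * (planeWave k w * conj (f w))‖ₑ = ‖q w‖ₑ * ‖f w‖ₑ := by
  rw [enorm_mul, enorm_mul, enorm_planeWave, one_mul, RCLike.enorm_conj]

lemma continuous_mul_planeWave_mul_conj (hq : Continuous q) (hf : Continuous f) :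
    Continuous fun w => q w * (planeWave k w * conj (f w)) :=
  hq.mul ((continuous_planeWave.comp (Continuous.prodMk_right k)).mul (continuous_conj.comp hf))

lemma enorm_conjCauchy_le (q f : ℂ → ℂ) (z : ℂ) :
    ‖conjCauchy q k f z‖ₑ ≤ ∫⁻ w, ‖q w‖ₑ * ‖(z - w)⁻¹‖ₑ * ‖f w‖ₑ := by
  refine (enorm_cauchyTransform_le _ z).trans (le_of_eq (lintegral_congr fun w => ?_))
  rw [enorm_mul_planeWave_mul_conj, mul_right_comm]

lemma enorm_conjCauchy_le_mul {M : ℝ≥0∞} (hq : Continuous q) (hM : ∀ w ∈ tsupport q, ‖f w‖ₑ ≤ M)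
    (z : ℂ) :
    ‖conjCauchy q k f z‖ₑ ≤ (∫⁻ w, ‖q w‖ₑ * ‖(z - w)⁻¹‖ₑ) * M := by
  rw [← lintegral_mul_const _ (by fun_prop)]
  refine (enorm_conjCauchy_le k q f z).trans (lintegral_mono fun w => ?_)
  by_cases hw : w ∈ tsupport q
  · gcongr
    exact hM w hw
  · simp [image_eq_zero_of_notMem_tsupport hw]

lemma continuous_conjCauchy (hq : Continuous q) (hsupp : HasCompactSupport q)
    (hf : Continuous f) : Continuous (conjCauchy q k f) :=
  continuous_cauchyTransform (continuous_mul_planeWave_mul_conj k hq hf) hsupp.mul_right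

lemma conjCauchy_add {f₁ f₂ : ℂ → ℂ} (hq : Continuous q) (hsupp : HasCompactSupport q)
    (hf₁ : Continuous f₁) (hf₂ : Continuous f₂) :
    conjCauchy q k (f₁ + f₂) = conjCauchy q k f₁ + conjCauchy q k f₂ := by
  ext z
  simp only [conjCauchy, cauchyTransform, Pi.add_apply, map_add, mul_add, add_mul]
  rw [integral_add, mul_add]
  · exact integrable_mul_inv_sub (continuous_mul_planeWave_mul_conj k hq hf₁) hsupp.mul_right z
  · exact integrable_mul_inv_sub (continuous_mul_planeWave_mul_conj k hq hf₂) hsupp.mul_right z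

lemma enorm_conjCauchy_sub_le {M : ℝ≥0∞} (hq : Continuous q) (hsupp : HasCompactSupport q)
    (hf : Continuous f) (hM : ∀ w, ‖f w‖ₑ ≤ M) (z z' : ℂ) :
    ‖conjCauchy q k f z - conjCauchy q k f z'‖ₑ ≤
      (∫⁻ w, ‖q w‖ₑ * ‖(z - w)⁻¹ - (z' - w)⁻¹‖ₑ) * M := by
  rw [← lintegral_mul_const _ (by fun_prop)]
  refine (enorm_cauchyTransform_sub_le (continuous_mul_planeWave_mul_conj k hq hf)
    hsupp.mul_right z z').trans (lintegral_mono fun w => ?_)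
  rw [enorm_mul_planeWave_mul_conj, mul_right_comm]
  gcongr
  exact hM w

end ConjCauchy

section Oscillation

lemma enorm_integral_planeWave_mul_le {k : ℂ} (hk : k ≠ 0) {G : ℂ → ℂ} (hG : Integrable G) :
    ‖∫ v, planeWave k v * G v‖ₑ ≤ ∫⁻ v, ‖G v - G (v + π / 2 * k⁻¹)‖ₑ := by
  set ξ : ℂ := π⁻¹ • conj k with hξ
  have hξ0 : ξ ≠ 0 := by simpa [hξ] using hk
  have hshift : (1 / (2 * ‖ξ‖ ^ 2) : ℝ) • ξ = π / 2 * k⁻¹ := by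
    have hπ : (π : ℂ) ≠ 0 := ofReal_ne_zero.2 Real.pi_ne_zero
    have hk' : (‖k‖ : ℂ) ≠ 0 := ofReal_ne_zero.2 (norm_ne_zero_iff.2 hk)
    rw [Complex.inv_def, normSq_eq_norm_sq, hξ, norm_smul, RCLike.norm_conj, norm_inv,
      Real.norm_of_nonneg Real.pi_nonneg, real_smul, real_smul]
    push_cast
    field_simp
  have hperiod := fourierIntegral_eq_half_sub_half_period_translate hξ0 hG
  simp only [hshift] at hperiod
  rw [integral_planeWave_mul, Real.fourier_eq, hperiod, enorm_smul]
  calc ‖(1 / 2 : ℂ)‖ₑ * ‖∫ v, 𝐞 (-inner ℝ v ξ) • (G v - G (v + π / 2 * k⁻¹))‖ₑ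
    _ ≤ 1 * ∫⁻ v, ‖𝐞 (-inner ℝ v ξ) • (G v - G (v + π / 2 * k⁻¹))‖ₑ := by
      gcongr
      · rw [← ofReal_norm, ENNReal.ofReal_le_one]
        norm_num
      · exact enorm_integral_le_lintegral_enorm _
    _ = ∫⁻ v, ‖G v - G (v + π / 2 * k⁻¹)‖ₑ := by
      simp only [← ofReal_norm, Circle.norm_smul, one_mul]

lemma enorm_conjCauchy_le_of_enorm_sub_translate_le {q g : ℂ → ℂ} (hq : Continuous q)
    (hsupp : HasCompactSupport q) (hg : Continuous g) {k : ℂ} (hk : k ≠ 0) {M δ : ℝ≥0∞}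
    (hM : ∀ v, ‖g v‖ₑ ≤ M) (hδ : ∀ v, ‖g v - g (v + π / 2 * k⁻¹)‖ₑ ≤ δ) (z : ℂ) :
    ‖conjCauchy q k g z‖ₑ ≤
      (∫⁻ v, ‖q v * (z - v)⁻¹ - q (v + π / 2 * k⁻¹) * (z - (v + π / 2 * k⁻¹))⁻¹‖ₑ) * M +
        (∫⁻ v, ‖q v‖ₑ * ‖(z - v)⁻¹‖ₑ) * δ := by
  set τ : ℂ := π / 2 * k⁻¹
  set A : ℂ → ℂ := fun v => q v * (z - v)⁻¹
  have : Measurable A := by fun_prop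
  have hG : Integrable fun v => A v * conj (g v) := by
    refine (integrable_mul_inv_sub (hq.mul (continuous_conj.comp hg)) hsupp.mul_right z).congr ?_
    exact .of_forall fun v => mul_right_comm _ _ _
  have hwave : conjCauchy q k g z = (π : ℂ)⁻¹ * ∫ v, planeWave k v * (A v * conj (g v)) := by
    rw [conjCauchy, cauchyTransform]
    congr! 3 with v
    ring
  have hpt (v : ℂ) : ‖A v * conj (g v) - A (v + τ) * conj (g (v + τ))‖ₑ ≤
      ‖A v - A (v + τ)‖ₑ * M + ‖A (v + τ)‖ₑ * δ := by
    have hsplit : A v * conj (g v) - A (v + τ) * conj (g (v + τ)) =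
        (A v - A (v + τ)) * conj (g v) + A (v + τ) * conj (g v - g (v + τ)) := by
      rw [map_sub]; ring
    rw [hsplit]
    refine (enorm_add_le _ _).trans ?_
    rw [enorm_mul, enorm_mul, RCLike.enorm_conj, RCLike.enorm_conj]
    gcongr
    exacts [hM v, hδ v]
  rw [hwave]
  calc ‖(π : ℂ)⁻¹ * ∫ v, planeWave k v * (A v * conj (g v))‖ₑ
    _ ≤ ∫⁻ v, ‖A v * conj (g v) - A (v + τ) * conj (g (v + τ))‖ₑ :=
      (enorm_pi_inv_mul_le _).trans (enorm_integral_planeWave_mul_le hk hG)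
    _ ≤ ∫⁻ v, (‖A v - A (v + τ)‖ₑ * M + ‖A (v + τ)‖ₑ * δ) := lintegral_mono hpt
    _ = (∫⁻ v, ‖A v - A (v + τ)‖ₑ) * M + (∫⁻ v, ‖A v‖ₑ) * δ := by
      rw [lintegral_add_left (by fun_prop), lintegral_mul_const _ (by fun_prop),
        lintegral_mul_const _ (by fun_prop), lintegral_add_right_eq_self (fun v => ‖A v‖ₑ) τ]
    _ = _ := by simp only [A, enorm_mul]

theorem eventually_enorm_conjCauchy_conjCauchy_le {q : ℂ → ℂ} (hq : Continuous q)
    (hsupp : HasCompactSupport q) {η : ℝ≥0∞} (hη : η ≠ 0) :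
    ∀ᶠ k in Bornology.cobounded ℂ, ∀ (f : ℂ → ℂ) (M : ℝ≥0∞), Continuous f → (∀ w, ‖f w‖ₑ ≤ M) →
      ∀ z, ‖conjCauchy q k (conjCauchy q k f) z‖ₑ ≤ η * M := by
  obtain ⟨D, hDtop, hD⟩ := exists_lintegral_enorm_mul_inv_rpow_le hq hsupp zero_le_one one_lt_two
  simp only [ENNReal.rpow_one] at hD
  set ε : ℝ≥0∞ := η / (D + D)
  have hε : ε ≠ 0 := (ENNReal.div_pos hη (by finiteness)).ne'
  have hshift : Filter.Tendsto (fun k : ℂ => π / 2 * k⁻¹) (Bornology.cobounded ℂ) (nhds 0) := by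
    simpa using (Filter.tendsto_inv₀_cobounded (α := ℂ)).const_mul ((π : ℂ) / 2)
  filter_upwards [
    hshift.eventually (eventually_lintegral_enorm_kernel_sub_translate_le hq hsupp hε),
    hshift.eventually (eventually_lintegral_enorm_mul_inv_sub_inv_le hq hsupp hε),
    Bornology.eventually_ne_cobounded (0 : ℂ)] with k hkernel hcauchy hk f M hf hM z
  have hbound (v : ℂ) : ‖conjCauchy q k f v‖ₑ ≤ D * M :=
    (enorm_conjCauchy_le_mul k hq (fun w _ => hM w) v).trans (by gcongr; exact hD v)
  have hosc (v : ℂ) : ‖conjCauchy q k f v - conjCauchy q k f (v + π / 2 * k⁻¹)‖ₑ ≤ ε * M :=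
    (enorm_conjCauchy_sub_le k hq hsupp hf hM _ _).trans (by gcongr; exact hcauchy v)
  calc ‖conjCauchy q k (conjCauchy q k f) z‖ₑ
    _ ≤ ε * (D * M) + D * (ε * M) := by
      refine (enorm_conjCauchy_le_of_enorm_sub_translate_le hq hsupp
        (continuous_conjCauchy k hq hsupp hf) hk hbound hosc z).trans ?_
      gcongr
      exacts [hkernel z, hD z]
    _ = ε * (D + D) * M := by ring
    _ ≤ η * M := by
      gcongr
      exact ENNReal.mul_le_of_le_div le_rfl

end Oscillation

lemma eLpNorm_comp_continuousLinearEquiv {E F : Type*} [NormedAddCommGroup E] [NormedSpace ℝ E]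
    [FiniteDimensional ℝ E] [MeasurableSpace E] [BorelSpace E] (μ : Measure E)
    [μ.IsAddHaarMeasure] [NormedAddCommGroup F] {p : ℝ≥0∞} (hp : p ≠ ⊤) (L : E ≃L[ℝ] E)
    (f : E → F) :
    eLpNorm (f ∘ L) p μ =
      ENNReal.ofReal |(LinearMap.det (L : E →ₗ[ℝ] E))⁻¹| ^ (1 / p).toReal * eLpNorm f p μ := by
  have hL : MeasurableEmbedding L := L.toHomeomorph.measurableEmbedding
  rw [← hL.eLpNorm_map_measure]
  have hmap := Measure.map_linearMap_addHaar_eq_smul_addHaar μ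
    (LinearEquiv.isUnit_det' L.toLinearEquiv).ne_zero
  exact (congrArg (eLpNorm f p ·) hmap).trans (eLpNorm_smul_measure_of_ne_top hp f _)

lemma eLpNorm_eLpNorm_le {α β F : Type*} [MeasurableSpace α] [MeasurableSpace β]
    {μ : Measure α} {ν : Measure β} [SFinite μ] [SFinite ν] [NormedAddCommGroup F] {b : α × β → F}
    (hb : StronglyMeasurable b) {s : ℝ} (hs : 0 < s) {C : ℝ≥0∞}
    (hC : ∀ y, eLpNorm (fun x => b (x, y)) (ENNReal.ofReal s) μ ≤ C) :
    eLpNorm (fun x => eLpNorm (fun y => b (x, y)) (ENNReal.ofReal s) ν) (ENNReal.ofReal s) μ ≤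
      C * ν Set.univ ^ s⁻¹ := by
  rw [← ENNReal.rpow_le_rpow_iff hs, eLpNorm_ofReal_rpow hs,
    ENNReal.mul_rpow_of_nonneg _ _ hs.le, ENNReal.rpow_inv_rpow hs.ne']
  calc ∫⁻ x, ‖eLpNorm (fun y => b (x, y)) (ENNReal.ofReal s) ν‖ₑ ^ s ∂μ
    _ = ∫⁻ x, ∫⁻ y, ‖b (x, y)‖ₑ ^ s ∂ν ∂μ := by simp_rw [enorm_eq_self, eLpNorm_ofReal_rpow hs]
    _ = ∫⁻ y, ∫⁻ x, ‖b (x, y)‖ₑ ^ s ∂μ ∂ν :=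
      lintegral_lintegral_swap (hb.enorm.pow_const s).aemeasurable
    _ ≤ ∫⁻ _, C ^ s ∂ν := by
      refine lintegral_mono fun y => ?_
      rw [← eLpNorm_ofReal_rpow hs]
      gcongr
      exact hC y
    _ = C ^ s * ν Set.univ := lintegral_const _

lemma measurable_eLpNorm_prodMk_left {α β F : Type*} [MeasurableSpace α] [MeasurableSpace β]
    {ν : Measure β} [SFinite ν] [NormedAddCommGroup F] {b : α × β → F}
    (hb : StronglyMeasurable b) {s : ℝ} (hs : 0 < s) :
    Measurable fun x => eLpNorm (fun y => b (x, y)) (ENNReal.ofReal s) ν := by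
  have hpow (x : α) : eLpNorm (fun y => b (x, y)) (ENNReal.ofReal s) ν =
      (∫⁻ y, ‖b (x, y)‖ₑ ^ s ∂ν) ^ s⁻¹ := by
    rw [← eLpNorm_ofReal_rpow hs, ENNReal.rpow_rpow_inv hs.ne']
  simp_rw [hpow]
  exact (hb.enorm.pow_const s).lintegral_prod_right'.pow_const _

lemma memLp_eLpNorm_prodMk_left {α β F : Type*} [MeasurableSpace α] [MeasurableSpace β]
    {μ : Measure α} {ν : Measure β} [SFinite μ] [IsFiniteMeasure ν] [NormedAddCommGroup F]
    {b : α × β → F} (hb : StronglyMeasurable b) {s : ℝ} (hs : 0 < s) {C : ℝ≥0∞} (hCtop : C ≠ ⊤)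
    (hC : ∀ y, eLpNorm (fun x => b (x, y)) (ENNReal.ofReal s) μ ≤ C) :
    MemLp (fun x => eLpNorm (fun y => b (x, y)) (ENNReal.ofReal s) ν) (ENNReal.ofReal s) μ :=
  ⟨(measurable_eLpNorm_prodMk_left hb hs).aestronglyMeasurable,
    (eLpNorm_eLpNorm_le hb hs hC).trans_lt (ENNReal.mul_lt_top hCtop.lt_top
      (ENNReal.rpow_lt_top_of_nonneg (by positivity) (measure_ne_top ν _)))⟩

lemma eLpNorm_ennreal_const_mul_le {α : Type*} [MeasurableSpace α] {μ : Measure α} {p : ℝ≥0∞}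
    {f : α → ℝ≥0∞} (hf : AEStronglyMeasurable f μ) (c : ℝ≥0∞) :
    eLpNorm (fun x => c * f x) p μ ≤ c * eLpNorm f p μ :=
  eLpNorm_le_mul_eLpNorm_of_ae_le_mul'' p hf (.of_forall fun _ => le_rfl)

lemma memLp_ennreal_const_mul {α : Type*} [MeasurableSpace α] {μ : Measure α} {p : ℝ≥0∞}
    {f : α → ℝ≥0∞} (hf : MemLp f p μ) {c : ℝ≥0∞} (hc : c ≠ ⊤) :
    MemLp (fun x => c * f x) p μ :=
  ⟨(hf.1.aemeasurable.const_mul c).aestronglyMeasurable,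
    (eLpNorm_ennreal_const_mul_le hf.1 c).trans_lt (ENNReal.mul_lt_top hc.lt_top hf.2)⟩

lemma exists_holderConjugate_lt_two {s : ℝ} (hs : 2 < s) :
    ∃ p : ℝ, p.HolderConjugate s ∧ p < 2 := by
  have hps := (Real.HolderConjugate.conjExponent (by linarith : 1 < s)).symm
  refine ⟨_, hps, ?_⟩
  nlinarith [hps.mul_eq_add, hps.lt]

section PlaneWaveTransform

variable {q : ℂ → ℂ}

lemma exists_eLpNorm_mul_inv_sub_le (hq : Continuous q) (hsupp : HasCompactSupport q) {p : ℝ}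
    (hp0 : 0 < p) (hp : p < 2) :
    ∃ D ≠ ⊤, ∀ z, eLpNorm (fun w => q w * (z - w)⁻¹) (ENNReal.ofReal p) ≤ D := by
  have hqp : Continuous fun w => ((‖q w‖ ^ p : ℝ) : ℂ) :=
    continuous_ofReal.comp (hq.norm.rpow_const fun _ => .inr hp0.le)
  have hqp_supp : HasCompactSupport fun w => ((‖q w‖ ^ p : ℝ) : ℂ) :=
    hsupp.comp_left (g := fun c => ((‖c‖ ^ p : ℝ) : ℂ)) (by simp [Real.zero_rpow hp0.ne'])
  obtain ⟨D, hDtop, hD⟩ := exists_lintegral_enorm_mul_inv_rpow_le hqp hqp_supp hp0.le hp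
  refine ⟨D ^ p⁻¹, ENNReal.rpow_ne_top_of_nonneg (by positivity) hDtop, fun z => ?_⟩
  rw [ENNReal.le_rpow_inv_iff hp0, eLpNorm_ofReal_rpow hp0]
  refine le_trans (le_of_eq (lintegral_congr fun w => ?_)) (hD z)
  have hqw : ‖((‖q w‖ ^ p : ℝ) : ℂ)‖ₑ = ‖q w‖ₑ ^ p := by
    rw [← ofReal_norm, norm_real, Real.norm_of_nonneg (by positivity), ← ofReal_norm,
      ENNReal.ofReal_rpow_of_nonneg (norm_nonneg _) hp0.le]
  rw [hqw, enorm_mul, ENNReal.mul_rpow_of_nonneg _ _ hp0.le]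

lemma conjCauchy_one_eq_fourier (q : ℂ → ℂ) (k z : ℂ) :
    conjCauchy q k 1 z = (π : ℂ)⁻¹ * 𝓕 (fun w => q w * (z - w)⁻¹) ((π : ℝ)⁻¹ • conj k) := by
  rw [conjCauchy, cauchyTransform, ← integral_planeWave_mul]
  congr! 3 with w
  simp only [Pi.one_apply, map_one]
  ring

lemma exists_eLpNorm_conjCauchy_one_le (hq : Continuous q) (hsupp : HasCompactSupport q) {s : ℝ}
    (hs : 2 < s) :
    ∃ C ≠ ⊤, ∀ z, eLpNorm (fun k => conjCauchy q k 1 z) (ENNReal.ofReal s) ≤ C := by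
  obtain ⟨p, hps, hp⟩ := exists_holderConjugate_lt_two hs
  obtain ⟨D, hDtop, hD⟩ := exists_eLpNorm_mul_inv_sub_le hq hsupp hps.pos hp
  let L : ℂ ≃L[ℝ] ℂ :=
    conjCLE.trans (ContinuousLinearEquiv.smulLeft (Units.mk0 π⁻¹ (by positivity)))
  set c : ℝ≥0∞ := ENNReal.ofReal |(LinearMap.det (L : ℂ →ₗ[ℝ] ℂ))⁻¹| ^
    (1 / ENNReal.ofReal s).toReal
  set A : ℝ≥0∞ := ENNReal.ofReal (s * 2 ^ s / (s - 2)) ^ (1 / s)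
  refine ⟨c * (A * D), ?_, fun z => ?_⟩
  · have hA : A ≠ ⊤ := ENNReal.rpow_ne_top_of_nonneg (by positivity) ENNReal.ofReal_ne_top
    have hc : c ≠ ⊤ :=
      ENNReal.rpow_ne_top_of_nonneg ENNReal.toReal_nonneg ENNReal.ofReal_ne_top
    finiteness
  set g : ℂ → ℂ := fun w => q w * (z - w)⁻¹
  have hpt (k : ℂ) : ‖conjCauchy q k 1 z‖ₑ ≤ ‖(𝓕 g ∘ L) k‖ₑ := by
    rw [conjCauchy_one_eq_fourier]
    exact enorm_pi_inv_mul_le _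
  refine (eLpNorm_mono_enorm hpt).trans ?_
  rw [eLpNorm_comp_continuousLinearEquiv _ ENNReal.ofReal_ne_top]
  have hHY := eLpNorm_fourier_le hps hs (integrable_mul_inv_sub hq hsupp z)
  gcongr
  exact hHY.trans (by gcongr; exact hD z)

lemma stronglyMeasurable_conjCauchy {f : ℂ → ℂ} (hq : Continuous q) (hf : Continuous f) :
    StronglyMeasurable fun x : ℂ × ℂ => conjCauchy q x.1 f x.2 := by
  have hwave : Continuous fun y : (ℂ × ℂ) × ℂ => planeWave y.1.1 y.2 :=
    continuous_planeWave.comp ((continuous_fst.comp continuous_fst).prodMk continuous_snd)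
  have hdensity : Continuous fun y : (ℂ × ℂ) × ℂ =>
      q y.2 * (planeWave y.1.1 y.2 * conj (f y.2)) :=
    (hq.comp continuous_snd).mul (hwave.mul (continuous_conj.comp (hf.comp continuous_snd)))
  have hinv : Measurable fun y : (ℂ × ℂ) × ℂ => (y.1.2 - y.2)⁻¹ := by fun_prop
  have hkernel := hdensity.measurable.mul hinv
  exact hkernel.stronglyMeasurable.integral_prod_right'.const_mul _

lemma exists_enorm_conjCauchy_le_mul_eLpNorm (hq : Continuous q) (hsupp : HasCompactSupport q)
    {s : ℝ} (hs : 2 < s) :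
    ∃ D ≠ ⊤, ∀ (k : ℂ) (f : ℂ → ℂ), Continuous f → ∀ z, ‖conjCauchy q k f z‖ₑ ≤
      D * eLpNorm f (ENNReal.ofReal s) (volume.restrict (tsupport q)) := by
  obtain ⟨p, hps, hp⟩ := exists_holderConjugate_lt_two hs
  have := hps.ennrealOfReal
  obtain ⟨D, hDtop, hD⟩ := exists_eLpNorm_mul_inv_sub_le hq hsupp hps.pos hp
  refine ⟨D, hDtop, fun k f hf z => ?_⟩
  set A : ℂ → ℂ := fun w => q w * (z - w)⁻¹
  calc ‖conjCauchy q k f z‖ₑ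
    _ ≤ ∫⁻ w, ‖(A • f) w‖ₑ := by
      simpa only [A, Pi.smul_apply', smul_eq_mul, enorm_mul] using enorm_conjCauchy_le k q f z
    _ = eLpNorm (A • f) 1 (volume.restrict (tsupport q)) := by
      have hsub : Function.support (A • f) ⊆ tsupport q := by
        refine fun w hw => subset_tsupport q fun hqw => hw ?_
        simp [A, hqw]
      rw [eLpNorm_restrict_eq_of_support_subset hsub, eLpNorm_one_eq_lintegral_enorm]
    _ ≤ eLpNorm A (ENNReal.ofReal p) (volume.restrict (tsupport q)) *
        eLpNorm f (ENNReal.ofReal s) (volume.restrict (tsupport q)) :=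
      eLpNorm_smul_le_mul_eLpNorm hf.aestronglyMeasurable
        (by fun_prop : Measurable A).aestronglyMeasurable
    _ ≤ D * eLpNorm f (ENNReal.ofReal s) (volume.restrict (tsupport q)) := by
      gcongr
      exact (eLpNorm_restrict_le _ _ _ _).trans (hD z)

end PlaneWaveTransform

namespace IsNormalizedSolution

section Pointwise

variable {q m n : ℂ → ℂ} {k : ℂ}

lemma enorm_sub_one_le (h : IsNormalizedSolution q k m n) (hq : Continuous q)
    (hsupp : HasCompactSupport q) {N : ℝ≥0∞} (hN : ∀ w ∈ tsupport q, ‖n w‖ₑ ≤ N) (z : ℂ) :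
    ‖m z - 1‖ₑ ≤ (∫⁻ w, ‖q w‖ₑ * ‖(z - w)⁻¹‖ₑ) * N := by
  rw [show m z - 1 = _ from congrFun (h.sub_one_eq hq hsupp) z]
  refine enorm_conjCauchy_le_mul k hq (fun w hw => ?_) z
  rw [enorm_mul, enorm_planeWave, one_mul, RCLike.enorm_conj]
  exact hN w hw

lemma iSup_enorm_sub_one_ne_top (h : IsNormalizedSolution q k m n) (hq : Continuous q)
    (hsupp : HasCompactSupport q) : ⨆ z, ‖m z - 1‖ₑ ≠ ⊤ := by
  obtain ⟨D, hDtop, hD⟩ := exists_lintegral_enorm_mul_inv_rpow_le hq hsupp zero_le_one one_lt_two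
  simp only [ENNReal.rpow_one] at hD
  obtain ⟨N, hN⟩ := hsupp.isCompact.exists_bound_of_continuousOn
    h.differentiable_snd.continuous.continuousOn
  refine ne_top_of_le_ne_top (ENNReal.mul_ne_top hDtop (ENNReal.ofReal_ne_top (r := N)))
    (iSup_le fun z => ?_)
  refine (h.enorm_sub_one_le hq hsupp (fun w hw => ?_) z).trans (by gcongr; exact hD z)
  rw [← ofReal_norm]
  exact ENNReal.ofReal_le_ofReal (hN w hw)

lemma conjCauchy_eq_add (h : IsNormalizedSolution q k m n) (hq : Continuous q)
    (hsupp : HasCompactSupport q) :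
    conjCauchy q k m = conjCauchy q k 1 + conjCauchy q k fun z => m z - 1 := by
  have hsub : Continuous fun z => m z - 1 :=
    h.differentiable_fst.continuous.sub continuous_const
  rw [← conjCauchy_add k hq hsupp continuous_one hsub]
  congr 1
  ext z
  simp

lemma sub_one_eq_add (h : IsNormalizedSolution q k m n) (hq : Continuous q)
    (hsupp : HasCompactSupport q) :
    (fun z => m z - 1) =
      conjCauchy q k (conjCauchy q k 1) + conjCauchy q k (conjCauchy q k fun z => m z - 1) := by
  conv_lhs => rw [h.sub_one_eq hq hsupp, h.planeWave_mul_conj_snd_eq hq hsupp,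
    h.conjCauchy_eq_add hq hsupp]
  exact conjCauchy_add k hq hsupp (continuous_conjCauchy k hq hsupp continuous_one)
    (continuous_conjCauchy k hq hsupp (h.differentiable_fst.continuous.sub continuous_const))

lemma enorm_snd_le (h : IsNormalizedSolution q k m n) (hq : Continuous q)
    (hsupp : HasCompactSupport q) {M : ℝ≥0∞} (hM : ∀ w, ‖m w - 1‖ₑ ≤ M) (z : ℂ) :
    ‖n z‖ₑ ≤ ‖conjCauchy q k 1 z‖ₑ + (∫⁻ w, ‖q w‖ₑ * ‖(z - w)⁻¹‖ₑ) * M := by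
  have hn : ‖n z‖ₑ = ‖conjCauchy q k m z‖ₑ := by
    rw [← h.planeWave_mul_conj_snd_eq hq hsupp, enorm_mul, enorm_planeWave, one_mul,
      RCLike.enorm_conj]
  rw [hn, h.conjCauchy_eq_add hq hsupp]
  exact (enorm_add_le _ _).trans
    (add_le_add_right (enorm_conjCauchy_le_mul k hq (fun w _ => hM w) z) _)

end Pointwise

variable {q : ℂ → ℂ}

lemma eventually_enorm_sub_one_le (hq : Continuous q) (hsupp : HasCompactSupport q) :
    ∀ᶠ k in Bornology.cobounded ℂ, ∀ (m n : ℂ → ℂ) (β : ℝ≥0∞), IsNormalizedSolution q k m n →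
      (∀ z, ‖conjCauchy q k (conjCauchy q k 1) z‖ₑ ≤ β) → ∀ z, ‖m z - 1‖ₑ ≤ 2 * β := by
  filter_upwards [eventually_enorm_conjCauchy_conjCauchy_le hq hsupp
    (ENNReal.inv_ne_zero.2 ENNReal.ofNat_ne_top : (2 : ℝ≥0∞)⁻¹ ≠ 0)] with k hcontr m n β h hβ z
  set M : ℝ≥0∞ := ⨆ z, ‖m z - 1‖ₑ
  have hself : M ≤ β + 2⁻¹ * M := by
    refine iSup_le fun z => ?_
    rw [congrFun (h.sub_one_eq_add hq hsupp) z]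
    exact (enorm_add_le _ _).trans (add_le_add (hβ z) (hcontr _ M
      (h.differentiable_fst.continuous.sub continuous_const) (le_iSup fun z => ‖m z - 1‖ₑ) z))
  have hM : M ≤ 2 * β := by
    have htop : 2⁻¹ * M ≠ ⊤ :=
      ENNReal.mul_ne_top (by simp) (h.iSup_enorm_sub_one_ne_top hq hsupp)
    have hhalf : 2⁻¹ * M + 2⁻¹ * M = M := by rw [← add_mul, ENNReal.inv_two_add_inv_two, one_mul]
    have hle : 2⁻¹ * M ≤ β := (ENNReal.add_le_add_iff_right htop).1 (hhalf.le.trans hself)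
    calc M = 2⁻¹ * M + 2⁻¹ * M := hhalf.symm
      _ ≤ β + β := add_le_add hle hle
      _ = 2 * β := (two_mul β).symm
  exact (le_iSup (fun z => ‖m z - 1‖ₑ) z).trans hM

variable {m n : ℂ → ℂ → ℂ}

lemma exists_enorm_sub_one_le (hq : Continuous q) (hsupp : HasCompactSupport q)
    (hn : Continuous fun p : ℂ × ℂ => n p.1 p.2)
    (h : ∀ k, IsNormalizedSolution q k (m · k) (n · k)) {S : Set ℂ} (hS : IsCompact S) :
    ∃ K ≠ ⊤, ∀ k ∈ S, ∀ z, ‖m z k - 1‖ₑ ≤ K := by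
  obtain ⟨D, hDtop, hD⟩ := exists_lintegral_enorm_mul_inv_rpow_le hq hsupp zero_le_one one_lt_two
  simp only [ENNReal.rpow_one] at hD
  obtain ⟨N, hN⟩ := (hsupp.isCompact.prod hS).exists_bound_of_continuousOn hn.continuousOn
  refine ⟨D * ENNReal.ofReal N, ENNReal.mul_ne_top hDtop ENNReal.ofReal_ne_top,
    fun k hk z => ?_⟩
  refine ((h k).enorm_sub_one_le hq hsupp (fun w hw => ?_) z).trans (by gcongr; exact hD z)
  rw [← ofReal_norm]
  exact ENNReal.ofReal_le_ofReal (hN (w, k) ⟨hw, hk⟩)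

lemma exists_memLp_enorm_sub_one_le (hq : Continuous q) (hsupp : HasCompactSupport q)
    (hn : Continuous fun p : ℂ × ℂ => n p.1 p.2)
    (h : ∀ k, IsNormalizedSolution q k (m · k) (n · k)) {s : ℝ} (hs : 2 < s) :
    ∃ Φ : ℂ → ℝ≥0∞, MemLp Φ (ENNReal.ofReal s) ∧ ∀ k z, ‖m z k - 1‖ₑ ≤ Φ k := by
  obtain ⟨R, -, hR⟩ := (Filter.hasBasis_cobounded_norm (E := ℂ)).eventually_iff.1
    (eventually_enorm_sub_one_le hq hsupp)
  obtain ⟨K, hKtop, hK⟩ := exists_enorm_sub_one_le hq hsupp hn h (isCompact_closedBall 0 R)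
  obtain ⟨D, hDtop, hD⟩ := exists_enorm_conjCauchy_le_mul_eLpNorm hq hsupp hs
  obtain ⟨C, hCtop, hC⟩ := exists_eLpNorm_conjCauchy_one_le hq hsupp hs
  set χ : ℂ → ℝ≥0∞ := (Metric.closedBall 0 R).indicator fun _ => K
  set B : ℂ → ℝ≥0∞ := fun k =>
    eLpNorm (conjCauchy q k 1) (ENNReal.ofReal s) (volume.restrict (tsupport q))
  have hχ : MemLp χ (ENNReal.ofReal s) :=
    ⟨(measurable_const.indicator measurableSet_closedBall).aestronglyMeasurable,
      (eLpNorm_indicator_const_le _ _).trans_lt (ENNReal.mul_lt_top hKtop.lt_top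
        (ENNReal.rpow_lt_top_of_nonneg (by positivity) measure_closedBall_lt_top.ne))⟩
  have hB : MemLp B (ENNReal.ofReal s) := by
    have : IsFiniteMeasure (volume.restrict (tsupport q)) :=
      ⟨by simpa using hsupp.isCompact.measure_lt_top⟩
    exact memLp_eLpNorm_prodMk_left (stronglyMeasurable_conjCauchy hq continuous_one)
      (by linarith) hCtop hC
  refine ⟨χ + fun k => 2 * D * B k,
    hχ.add (memLp_ennreal_const_mul hB (by finiteness)), fun k z => ?_⟩
  rw [Pi.add_apply]
  by_cases hk : k ∈ Metric.closedBall 0 R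
  · have hχk : χ k = K := Set.indicator_of_mem hk _
    exact hχk ▸ (hK k hk z).trans le_self_add
  · refine le_trans ?_ le_add_self
    rw [mul_assoc]
    refine hR ?_ _ _ _ (h k) (hD k _ (continuous_conjCauchy k hq hsupp continuous_one)) z
    exact (not_le.1 (mem_closedBall_zero_iff.not.1 hk)).le

theorem exists_eLpNorm_le (hq : Continuous q) (hsupp : HasCompactSupport q)
    (hn : Continuous fun p : ℂ × ℂ => n p.1 p.2)
    (h : ∀ k, IsNormalizedSolution q k (m · k) (n · k)) {s : ℝ} (hs : 2 < s) :
    ∃ C ≠ ⊤, ∀ z, eLpNorm (fun k => m z k - 1) (ENNReal.ofReal s) ≤ C ∧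
      eLpNorm (n z) (ENNReal.ofReal s) ≤ C := by
  obtain ⟨Φ, hΦLs, hΦ⟩ := exists_memLp_enorm_sub_one_le hq hsupp hn h hs
  obtain ⟨C, hCtop, hC⟩ := exists_eLpNorm_conjCauchy_one_le hq hsupp hs
  obtain ⟨D, hDtop, hD⟩ := exists_lintegral_enorm_mul_inv_rpow_le hq hsupp zero_le_one one_lt_two
  simp only [ENNReal.rpow_one] at hD
  set N : ℝ≥0∞ := eLpNorm Φ (ENNReal.ofReal s)
  have hN : N ≠ ⊤ := hΦLs.eLpNorm_ne_top
  refine ⟨max N (C + D * N), max_ne_top hN (by finiteness), fun z =>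
    ⟨le_max_of_le_left (eLpNorm_mono_enorm fun k => hΦ k z), le_max_of_le_right ?_⟩⟩
  have hb : Measurable fun k => ‖conjCauchy q k 1 z‖ₑ :=
    ((stronglyMeasurable_conjCauchy hq continuous_one).comp_measurable
      measurable_prodMk_right).enorm
  have hbC : eLpNorm (fun k => ‖conjCauchy q k 1 z‖ₑ) (ENNReal.ofReal s) ≤ C :=
    (eLpNorm_enorm _).trans_le (hC z)
  have hpt (k : ℂ) : ‖n z k‖ₑ ≤
      ((fun k => ‖conjCauchy q k 1 z‖ₑ) + fun k => D * Φ k) k := by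
    refine ((h k).enorm_snd_le hq hsupp (hΦ k) z).trans ?_
    rw [Pi.add_apply]
    gcongr
    exact hD z
  refine (eLpNorm_mono_enorm hpt).trans ((eLpNorm_add_le hb.aestronglyMeasurable
    (memLp_ennreal_const_mul hΦLs hDtop).1 (ENNReal.one_le_ofReal.2 (by linarith))).trans ?_)
  exact add_le_add hbC (eLpNorm_ennreal_const_mul_le hΦLs.1 D)

end IsNormalizedSolution

lemma isNormalizedSolution_conj {q m n : ℂ → ℂ} {k : ℂ} (hm : Differentiable ℝ m)
    (hn : Differentiable ℝ n) (hwD : ∀ z, wD m z = conj (q z) * n z)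
    (hwDbar : ∀ z, wDbar n z - I * conj k * n z = q z * m z)
    (hmlim : Filter.Tendsto (fun z => m z - 1) (Filter.cocompact ℂ) (nhds 0))
    (hnlim : Filter.Tendsto n (Filter.cocompact ℂ) (nhds 0)) :
    IsNormalizedSolution q k (fun z => conj (m z)) (fun z => conj (n z)) where
  differentiable_fst := (conjCLE : ℂ →L[ℝ] ℂ).differentiable.comp hm
  differentiable_snd := (conjCLE : ℂ →L[ℝ] ℂ).differentiable.comp hn
  wDbar_fst z := by rw [wDbar_conj (hm z), hwD, map_mul, conj_conj]
  wD_snd z := by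
    have hconj := congrArg conj (hwDbar z)
    simp only [map_sub, map_mul, conj_I, conj_conj] at hconj
    rw [wD_conj (hn z), ← hconj]
    ring
  tendsto_fst := by simpa [Function.comp_def] using (continuous_conj.tendsto 0).comp hmlim
  tendsto_snd := by simpa [Function.comp_def] using (continuous_conj.tendsto 0).comp hnlim

lemma eLpNorm_conj_comp_conj (f : ℂ → ℂ) (p : ℝ≥0∞) :
    eLpNorm (fun k => conj (f (conj k))) p = eLpNorm f p := by
  have hmp : MeasurePreserving (conj : ℂ → ℂ) := conjLIE.measurePreserving
  have hemb : MeasurableEmbedding (conj : ℂ → ℂ) := conjLIE.toHomeomorph.measurableEmbedding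
  calc eLpNorm (fun k => conj (f (conj k))) p volume = eLpNorm (f ∘ conj) p volume :=
        eLpNorm_congr_enorm_ae (.of_forall fun k => RCLike.enorm_conj _)
    _ = eLpNorm f p volume := by rw [← hemb.eLpNorm_map_measure, hmp.map_eq]

theorem uniform_Ls_bound_in_k_general {q : ℂ → ℂ} (hq : Continuous q)
    (hqsupp : HasCompactSupport q) {M11 M12 M21 M22 : ℂ → ℂ → ℂ}
    (hc11 : Continuous fun p : ℂ × ℂ => M11 p.1 p.2)
    (hc12 : Continuous fun p : ℂ × ℂ => M12 p.1 p.2)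
    (hc21 : Continuous fun p : ℂ × ℂ => M21 p.1 p.2)
    (hc22 : Continuous fun p : ℂ × ℂ => M22 p.1 p.2)
    (hdiff : ∀ k : ℂ, Differentiable ℝ (fun z => M11 z k) ∧
      Differentiable ℝ (fun z => M12 z k) ∧
      Differentiable ℝ (fun z => M21 z k) ∧
      Differentiable ℝ (fun z => M22 z k))
    (hsys : ∀ k z : ℂ,
      wDbar (fun ζ => M11 ζ k) z = q z * M21 z k ∧
      wD (fun ζ => M21 ζ k) z + I * k * M21 z k = conj (q z) * M11 z k ∧
      wDbar (fun ζ => M12 ζ k) z - I * k * M12 z k = q z * M22 z k ∧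
      wD (fun ζ => M22 ζ k) z = conj (q z) * M12 z k)
    (hlim : ∀ k : ℂ,
      Filter.Tendsto (fun z => M11 z k - 1) (Filter.cocompact ℂ) (nhds 0) ∧
      Filter.Tendsto (fun z => M12 z k) (Filter.cocompact ℂ) (nhds 0) ∧
      Filter.Tendsto (fun z => M21 z k) (Filter.cocompact ℂ) (nhds 0) ∧
      Filter.Tendsto (fun z => M22 z k - 1) (Filter.cocompact ℂ) (nhds 0))
    {s : ℝ} (hs : 2 < s) :
    ∃ C : ℝ, ∀ z : ℂ,
      (MemLp (fun k => M11 z k - 1) (ENNReal.ofReal s) ∧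
        eLpNorm (fun k => M11 z k - 1) (ENNReal.ofReal s) ≤ ENNReal.ofReal C) ∧
      (MemLp (fun k => M12 z k) (ENNReal.ofReal s) ∧
        eLpNorm (fun k => M12 z k) (ENNReal.ofReal s) ≤ ENNReal.ofReal C) ∧
      (MemLp (fun k => M21 z k) (ENNReal.ofReal s) ∧
        eLpNorm (fun k => M21 z k) (ENNReal.ofReal s) ≤ ENNReal.ofReal C) ∧
      (MemLp (fun k => M22 z k - 1) (ENNReal.ofReal s) ∧
        eLpNorm (fun k => M22 z k - 1) (ENNReal.ofReal s) ≤ ENNReal.ofReal C) := by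
  have hcol1 (k : ℂ) : IsNormalizedSolution q k (M11 · k) (M21 · k) :=
    ⟨(hdiff k).1, (hdiff k).2.2.1, fun z => (hsys k z).1, fun z => (hsys k z).2.1,
      (hlim k).1, (hlim k).2.2.1⟩
  have hcol2 (k : ℂ) :
      IsNormalizedSolution q k (fun z => conj (M22 z (conj k))) (fun z => conj (M12 z (conj k))) :=
    isNormalizedSolution_conj (hdiff _).2.2.2 (hdiff _).2.1 (fun z => (hsys _ z).2.2.2)
      (fun z => (hsys _ z).2.2.1) (hlim _).2.2.2 (hlim _).2.1
  have hc12' : Continuous fun p : ℂ × ℂ => conj (M12 p.1 (conj p.2)) :=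
    continuous_conj.comp (hc12.comp (continuous_fst.prodMk (continuous_conj.comp continuous_snd)))
  obtain ⟨A, hAtop, hA⟩ := IsNormalizedSolution.exists_eLpNorm_le hq hqsupp hc21 hcol1 hs
  obtain ⟨B, hBtop, hB⟩ := IsNormalizedSolution.exists_eLpNorm_le hq hqsupp hc12' hcol2 hs
  refine ⟨(A + B).toReal, fun z => ?_⟩
  rw [ENNReal.ofReal_toReal (ENNReal.add_ne_top.2 ⟨hAtop, hBtop⟩)]
  have hB22 : eLpNorm (fun k => M22 z k - 1) (ENNReal.ofReal s) volume ≤ B := by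
    rw [← eLpNorm_conj_comp_conj]
    simpa using (hB z).1
  have hB12 : eLpNorm (M12 z) (ENNReal.ofReal s) volume ≤ B :=
    (eLpNorm_conj_comp_conj _ _).symm.trans_le (hB z).2
  have hmem {f : ℂ → ℂ} {C : ℝ≥0∞} (hf : Continuous f)
      (hC : eLpNorm f (ENNReal.ofReal s) volume ≤ C) (hCtop : C ≠ ⊤) (hCle : C ≤ A + B) :
      MemLp f (ENNReal.ofReal s) volume ∧ eLpNorm f (ENNReal.ofReal s) volume ≤ A + B :=
    ⟨⟨hf.aestronglyMeasurable, hC.trans_lt hCtop.lt_top⟩, hC.trans hCle⟩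
  exact ⟨hmem ((hc11.uncurry_left z).sub continuous_const) (hA z).1 hAtop le_self_add,
    hmem (hc12.uncurry_left z) hB12 hBtop le_add_self,
    hmem (hc21.uncurry_left z) (hA z).2 hAtop le_self_add,
    hmem ((hc22.uncurry_left z).sub continuous_const) hB22 hBtop le_add_self⟩

/-- Uniform-in-`z` bound `sup_z ‖m(z,·) − I‖_{L^s(dk)} ≤ C` for the normalized
exponentially growing solutions, for every `2 < s < ∞`. -/
theorem uniform_Ls_bound_in_k
    (ε : ℝ) (hε0 : 0 < ε) (hε1 : ε < 1) (q : ℂ → ℂ)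
    (hqsupp : HasCompactSupport q) (hqhold : IsHolder ε q)
    (r₀ : ℝ) (hr₀ : 2 < r₀)
    (M11 M12 M21 M22 : ℂ → ℂ → ℂ)
    (hc11 : Continuous fun p : ℂ × ℂ => M11 p.1 p.2)
    (hc12 : Continuous fun p : ℂ × ℂ => M12 p.1 p.2)
    (hc21 : Continuous fun p : ℂ × ℂ => M21 p.1 p.2)
    (hc22 : Continuous fun p : ℂ × ℂ => M22 p.1 p.2)
    (hdiff : ∀ k : ℂ, Differentiable ℝ (fun z => M11 z k) ∧
      Differentiable ℝ (fun z => M12 z k) ∧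
      Differentiable ℝ (fun z => M21 z k) ∧
      Differentiable ℝ (fun z => M22 z k))
    (hsys : ∀ k z : ℂ,
      wDbar (fun ζ => M11 ζ k) z = q z * M21 z k ∧
      wD (fun ζ => M21 ζ k) z + Complex.I * k * M21 z k = (starRingEnd ℂ) (q z) * M11 z k ∧
      wDbar (fun ζ => M12 ζ k) z - Complex.I * k * M12 z k = q z * M22 z k ∧
      wD (fun ζ => M22 ζ k) z = (starRingEnd ℂ) (q z) * M12 z k)
    (hLp : ∀ k : ℂ, MemLp (fun z => M11 z k - 1) (ENNReal.ofReal r₀) ∧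
      MemLp (fun z => M12 z k) (ENNReal.ofReal r₀) ∧
      MemLp (fun z => M21 z k) (ENNReal.ofReal r₀) ∧
      MemLp (fun z => M22 z k - 1) (ENNReal.ofReal r₀))
    (hHold : ∀ k : ℂ, IsHolder ε (fun z => M11 z k - 1) ∧
      IsHolder ε (fun z => M12 z k) ∧
      IsHolder ε (fun z => M21 z k) ∧
      IsHolder ε (fun z => M22 z k - 1)) :
    ∀ s : ℝ, 2 < s → ∃ C : ℝ, ∀ z : ℂ,
      (MemLp (fun k => M11 z k - 1) (ENNReal.ofReal s) ∧
        eLpNorm (fun k => M11 z k - 1) (ENNReal.ofReal s) volume ≤ ENNReal.ofReal C) ∧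
      (MemLp (fun k => M12 z k) (ENNReal.ofReal s) ∧
        eLpNorm (fun k => M12 z k) (ENNReal.ofReal s) volume ≤ ENNReal.ofReal C) ∧
      (MemLp (fun k => M21 z k) (ENNReal.ofReal s) ∧
        eLpNorm (fun k => M21 z k) (ENNReal.ofReal s) volume ≤ ENNReal.ofReal C) ∧
      (MemLp (fun k => M22 z k - 1) (ENNReal.ofReal s) ∧
        eLpNorm (fun k => M22 z k - 1) (ENNReal.ofReal s) volume ≤ ENNReal.ofReal C) := by
  have hdecay {f : ℂ → ℂ} (hf : IsHolder ε f) (hfLp : MemLp f (ENNReal.ofReal r₀)) :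
      Filter.Tendsto f (Filter.cocompact ℂ) (nhds 0) :=
    tendsto_cocompact_zero_of_memLp (uniformContinuous_of_isHolder hε0 hf)
      (ENNReal.ofReal_pos.2 (by linarith)).ne' ENNReal.ofReal_ne_top hfLp
  have hq : Continuous q := (uniformContinuous_of_isHolder hε0 hqhold).continuous
  exact fun s hs => uniform_Ls_bound_in_k_general hq hqsupp hc11 hc12 hc21 hc22 hdiff hsys
    (fun k => ⟨hdecay (hHold k).1 (hLp k).1, hdecay (hHold k).2.1 (hLp k).2.1,
      hdecay (hHold k).2.2.1 (hLp k).2.2.1, hdecay (hHold k).2.2.2 (hLp k).2.2.2⟩) hs
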